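/- In every 4-connected graph with δ ≥ α, the circumference satisfies c ≥ min{n, 4δ − 2κ}. -/

import Mathlib

open SimpleGraph

variable {V : Type*}

/-- `G` is `k`-connected: more than `k` vertices and removing fewer than `k`
vertices leaves a connected graph. -/
def KConnected (G : SimpleGraph V) [Fintype V] (k : ℕ) : Prop :=
  k < Fintype.card V ∧
    ∀ S : Finset V, S.card < k → (G.induce ((↑S : Set V)ᶜ)).Connected

/-- vertex connectivity `κ`. -/
noncomputable def connectivity (G : SimpleGraph V) [Fintype V] : ℕ :=
  sSup {k | KConnected G k}

/-- independence number `α`. -/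
noncomputable def indepNumber (G : SimpleGraph V) [Fintype V] : ℕ :=
  sSup {k | ∃ s : Finset V, (∀ u ∈ s, ∀ v ∈ s, ¬ G.Adj u v) ∧ s.card = k}

/-- circumference `c`: length of a longest cycle. -/
noncomputable def circumference (G : SimpleGraph V) [Fintype V] : ℕ :=
  sSup {n | ∃ (v : V) (w : G.Walk v v), w.IsCycle ∧ w.length = n}

/-- `w` is a longest cycle of `G`. -/
def IsLongestCycle {G : SimpleGraph V} {v : V} (w : G.Walk v v) : Prop :=
  w.IsCycle ∧ ∀ (u : V) (w' : G.Walk u u), w'.IsCycle → w'.length ≤ w.length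

/-- dominating cycle: every edge has an endpoint on the cycle. -/
def IsDominatingCycle {G : SimpleGraph V} {v : V} (w : G.Walk v v) : Prop :=
  w.IsCycle ∧ ∀ x y, G.Adj x y → x ∈ w.support ∨ y ∈ w.support

/-- generalized cycle of length `n` with vertex set `W`: single vertices are
cycles of length 1, edges are cycles of length 2. -/
def ExtCycle (G : SimpleGraph V) (W : Set V) (n : ℕ) : Prop :=
  (n = 1 ∧ ∃ v : V, W = {v}) ∨
  (n = 2 ∧ ∃ u v : V, G.Adj u v ∧ W = {u, v}) ∨
  (3 ≤ n ∧ ∃ (v : V) (w : G.Walk v v), w.IsCycle ∧ w.length = n ∧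
      W = {x | x ∈ w.support})

/-- `p̄`: the length of a longest path in `G \ C`. -/
noncomputable def pathBar (G : SimpleGraph V) [Fintype V] {v : V} (w : G.Walk v v) : ℕ :=
  sSup {n | ∃ (a b : {x : V | x ∉ w.support})
      (p : (G.induce {x : V | x ∉ w.support}).Walk a b), p.IsPath ∧ p.length = n}

/-- `c̄`: the length of a longest (generalized) cycle in `G \ C`. -/
noncomputable def cycBar (G : SimpleGraph V) [Fintype V] {v : V} (w : G.Walk v v) : ℕ :=
  sSup {n | ∃ W, ExtCycle (G.induce {x : V | x ∉ w.support}) W n}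

/-- `CD_m`-cycle: every (generalized) cycle of length at least `m` meets `w`. -/
def IsCDCycle (G : SimpleGraph V) {v : V} (w : G.Walk v v) (m : ℕ) : Prop :=
  w.IsCycle ∧ ∀ (W : Set V) (n : ℕ), ExtCycle G W n → m ≤ n → ∃ x ∈ W, x ∈ w.support

/-!
Let `C` be a longest cycle and `H` a component of `G - C` with set of attachments `N` on `C`. The
successors of the attachments, together with an independent subset of `H`, form an independent set,
so `α ≤ δ` gives `|N| < δ`, with `H` complete when `|N| = δ - 1`. Consecutive attachments joined by
a path of `H` with `l` edges are at least `l + 2` apart on `C`. A 2-connected graph has, between any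
two vertices, a path at least as long as the minimum degree of the other vertices; if `H` has a cut
vertex, two minimal lobes take the place of `H`. The resulting long paths make enough gaps large
that `4δ ≤ |C| + 8`, which suffices since `κ ≥ 4`.

The exception is `H` consisting of two adjacent vertices with the same `δ - 1` neighbours on `C`.
Two such pairs give `4δ ≤ |C| + 5`. If one such pair is everything off `C`, comparing, for the two
sides of a minimum vertex cut, the neighbourhoods of the vertices next to `N` on `C` gives
`4δ ≤ |C| + 2κ`.
-/

section Paths

variable {G : SimpleGraph V}

/-- `G` has a path with `n` edges from `s` to `t` all of whose vertices lie in `W`. -/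
def HasPathIn (G : SimpleGraph V) (W : Set V) (s t : V) (n : ℕ) : Prop :=
  ∃ p : G.Walk s t, p.IsPath ∧ (∀ v ∈ p.support, v ∈ W) ∧ p.length = n

namespace HasPathIn

variable {W W' : Set V} {s t t' v : V} {m n : ℕ}

theorem mono (h : HasPathIn G W s t n) (hW : W ⊆ W') : HasPathIn G W' s t n := by
  obtain ⟨p, hp, hpW, hn⟩ := h
  exact ⟨p, hp, fun v hv => hW (hpW v hv), hn⟩

theorem singleton (v : V) : HasPathIn G {v} v v 0 :=
  ⟨.nil, .nil, by simp, rfl⟩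

theorem reverse (h : HasPathIn G W s t n) : HasPathIn G W t s n := by
  obtain ⟨p, hp, hpW, hn⟩ := h
  exact ⟨p.reverse, hp.reverse, by simpa using hpW, by simpa using hn⟩

theorem cons (h : HasPathIn G W s t n) (hvs : G.Adj v s) (hv : v ∉ W) :
    HasPathIn G (insert v W) v t (n + 1) := by
  obtain ⟨p, hp, hpW, rfl⟩ := h
  refine ⟨.cons hvs p, hp.cons fun hvp => hv (hpW v hvp), fun w hw => ?_, rfl⟩
  rcases List.mem_cons.1 (p.support_cons hvs ▸ hw) with rfl | hw
  · exact Set.mem_insert _ _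
  · exact Set.mem_insert_of_mem _ (hpW w hw)

theorem glue (h : HasPathIn G W s t m) (h' : HasPathIn G W' t t' n) (hWW' : W ∩ W' ⊆ {t}) :
    HasPathIn G (W ∪ W') s t' (m + n) := by
  obtain ⟨p, hp, hpW, rfl⟩ := h
  obtain ⟨q, hq, hqW', rfl⟩ := h'
  have hq_nodup : (t :: q.support.tail).Nodup := q.cons_tail_support ▸ hq.support_nodup
  refine ⟨p.append q, ?_, fun v hv => ?_, Walk.length_append p q⟩
  · rw [Walk.isPath_def, Walk.support_append]
    refine hp.support_nodup.append hq_nodup.of_cons fun v hvp hvq => ?_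
    obtain rfl : v = t := hWW' ⟨hpW v hvp, hqW' v (List.mem_of_mem_tail hvq)⟩
    exact (List.nodup_cons.1 hq_nodup).1 hvq
  · exact ((Walk.mem_support_append_iff p q).1 hv).imp (hpW v) (hqW' v)

theorem join (h : HasPathIn G W s t m) {s' : V} (h' : HasPathIn G W' s' t' n)
    (hWW' : Disjoint W W') (hadj : G.Adj t s') : HasPathIn G (W ∪ W') s t' (m + n + 1) := by
  have ht : t ∈ W := by
    obtain ⟨p, -, hpW, -⟩ := h
    exact hpW t p.end_mem_support
  refine (h.glue (h'.cons hadj (hWW'.notMem_of_mem_left ht)) ?_).mono ?_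
  · rintro v ⟨hv, rfl | hv'⟩
    · rfl
    · exact (hWW'.notMem_of_mem_left hv hv').elim
  · exact Set.union_subset Set.subset_union_left
      (Set.insert_subset (.inl ht) Set.subset_union_right)

theorem pos (h : HasPathIn G W s t n) (hst : s ≠ t) : 0 < n := by
  obtain ⟨p, -, -, rfl⟩ := h
  exact Nat.pos_of_ne_zero fun h0 => hst (p.eq_of_length_eq_zero h0)

theorem exists_isCycle (h : HasPathIn G W s t n) (hts : G.Adj t s) (hn : 2 ≤ n) :
    ∃ w : G.Walk t t, w.IsCycle ∧ w.length = n + 1 := by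
  obtain ⟨p, hp, -, rfl⟩ := h
  refine ⟨.cons hts p, (p.cons_isCycle_iff hts).2 ⟨hp, fun he => ?_⟩, rfl⟩
  have : p.length = 1 := by
    simpa using congrArg Walk.length (hp.eq_adj_toWalk_of_mem_edges (Sym2.eq_swap ▸ he))
  omega

end HasPathIn

theorem exists_hasPathIn {W : Finset V} {x y : V} (hx : x ∈ W)
    (hW : ∀ F ⊆ W, x ∈ F → y ∉ F → ∃ a ∈ F, ∃ b ∈ W, b ∉ F ∧ G.Adj a b) :
    ∃ n, HasPathIn G W x y n := by
  classical
  let R : Finset V := {v ∈ W | ∃ p : G.Walk x v, ∀ u ∈ p.support, u ∈ W}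
  have hyR : y ∈ R := by
    by_contra hyR
    have hxR : x ∈ R := Finset.mem_filter.2 ⟨hx, .nil, by simpa using hx⟩
    obtain ⟨a, ha, b, hb, hbR, hab⟩ := hW R (Finset.filter_subset _ _) hxR hyR
    obtain ⟨-, p, hp⟩ := Finset.mem_filter.1 ha
    refine hbR (Finset.mem_filter.2 ⟨hb, p.concat hab, fun u hu => ?_⟩)
    rw [Walk.support_concat, List.mem_append, List.mem_singleton] at hu
    rcases hu with hu | rfl
    exacts [hp u hu, hb]
  obtain ⟨-, p, hp⟩ := Finset.mem_filter.1 hyR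
  exact ⟨_, p.bypass, p.bypass_isPath, fun v hv => hp v (p.support_bypass_subset_support hv), rfl⟩

end Paths

section LongPaths

variable {G : SimpleGraph V} {W D F : Finset V} {x y v : V}

/-- `D` is a nonempty part of `W` attached to the rest of `W` through the vertex `v` only. -/
structure IsLobe (G : SimpleGraph V) (W D : Finset V) (v : V) : Prop where
  subset : D ⊆ W
  nonempty : D.Nonempty
  notMem : v ∉ D
  eq_of_adj : ∀ a ∈ D, ∀ b ∈ W, b ∉ D → G.Adj a b → b = v

/-- Adding the edge `xy` to `G[W]` yields a `2`-connected graph, expressed through the edges that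
leave the subsets of `W`. -/
structure TwoConnectedPlus (G : SimpleGraph V) (W : Finset V) (x y : V) : Prop where
  left_mem : x ∈ W
  right_mem : y ∈ W
  ne : x ≠ y
  exists_adj_ne : ∀ F ⊆ W, F.Nonempty → x ∉ F → y ∉ F → ∀ u,
    ∃ a ∈ F, ∃ b ∈ W, b ∉ F ∧ b ≠ u ∧ G.Adj a b
  exists_adj : ∀ F ⊆ W, x ∈ F → y ∉ F → ∃ a ∈ F, ∃ b ∈ W, b ∉ F ∧ G.Adj a b

namespace IsLobe

theorem exists_adj_ne (hmin : ∀ E ⊂ D, ∀ u, ¬ IsLobe G W E u) (hD : D ⊆ W) (hF : F ⊂ D)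
    (hFn : F.Nonempty) {u : V} (hu : u ∉ F) : ∃ a ∈ F, ∃ b ∈ W, b ∉ F ∧ b ≠ u ∧ G.Adj a b := by
  by_contra! h
  refine hmin F hF u ⟨hF.subset.trans hD, hFn, hu, fun a ha b hb hbF hab => ?_⟩
  by_contra hbu
  exact h a ha b hb hbF hbu hab

variable [DecidableEq V]

theorem mem_insert_of_adj (h : IsLobe G W D v) {a b : V} (ha : a ∈ D) (hb : b ∈ W)
    (hab : G.Adj a b) : b ∈ insert v D := by
  by_cases hbD : b ∈ D
  · exact Finset.mem_insert_of_mem hbD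
  · exact Finset.mem_insert.2 (.inl (h.eq_of_adj a ha b hb hbD hab))

theorem twoConnectedPlus (h : IsLobe G W D v) (hmin : ∀ E ⊂ D, ∀ u, ¬ IsLobe G W E u)
    (hv : ∃ a ∈ D, G.Adj a v) {s : V} (hs : s ∈ D) : TwoConnectedPlus G (insert v D) s v where
  left_mem := Finset.mem_insert_of_mem hs
  right_mem := Finset.mem_insert_self v D
  ne := ne_of_mem_of_not_mem hs h.notMem
  exists_adj_ne F hF hFn hsF hvF u := by
    have hFD : F ⊂ D := ((Finset.subset_insert_iff_of_notMem hvF).1 hF).ssubset_of_ne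
      fun e => hsF (e ▸ hs)
    by_cases hu : u ∈ F
    · obtain ⟨a, ha, b, hb, hbF, -, hab⟩ := exists_adj_ne hmin h.subset hFD hFn hvF
      exact ⟨a, ha, b, h.mem_insert_of_adj (hFD.subset ha) hb hab, hbF,
        fun e => hbF (e ▸ hu), hab⟩
    · obtain ⟨a, ha, b, hb, hbF, hbu, hab⟩ := exists_adj_ne hmin h.subset hFD hFn hu
      exact ⟨a, ha, b, h.mem_insert_of_adj (hFD.subset ha) hb hab, hbF, hbu, hab⟩
  exists_adj F hF hsF hvF := by
    have hFD : F ⊆ D := (Finset.subset_insert_iff_of_notMem hvF).1 hF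
    rcases hFD.eq_or_ssubset with rfl | hFD
    · obtain ⟨a, ha, hav⟩ := hv
      exact ⟨a, ha, v, Finset.mem_insert_self v F, hvF, hav⟩
    · obtain ⟨a, ha, b, hb, hbF, -, hab⟩ := exists_adj_ne hmin h.subset hFD ⟨s, hsF⟩ hvF
      exact ⟨a, ha, b, h.mem_insert_of_adj (hFD.subset ha) hb hab, hbF, hab⟩

end IsLobe

namespace TwoConnectedPlus

theorem exists_hasPathIn (h : TwoConnectedPlus G W x y) : ∃ n, 0 < n ∧ HasPathIn G W x y n := by
  obtain ⟨n, hn⟩ := _root_.exists_hasPathIn h.left_mem h.exists_adj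
  exact ⟨n, hn.pos h.ne, hn⟩

variable [DecidableEq V]

theorem exists_isLobe (h : TwoConnectedPlus G W x y) (hW : 3 ≤ W.card) :
    ∃ D v, IsLobe G (W.erase x) D v ∧ y ∉ D ∧ v ∈ W.erase x ∧
      (∃ a ∈ D, G.Adj a x) ∧ (∃ a ∈ D, G.Adj a v) ∧
      ∀ E ⊂ D, ∀ u, ¬ IsLobe G (W.erase x) E u := by
  have hy : y ∈ W.erase x := Finset.mem_erase.2 ⟨h.ne.symm, h.right_mem⟩
  have hrest : IsLobe G (W.erase x) ((W.erase x).erase y) y := by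
    refine ⟨Finset.erase_subset _ _, ?_, Finset.notMem_erase _ _, fun a _ b hb hbD _ => ?_⟩
    · rw [← Finset.card_pos, Finset.card_erase_of_mem hy, Finset.card_erase_of_mem h.left_mem]
      omega
    · by_contra hby
      exact hbD (Finset.mem_erase.2 ⟨hby, hb⟩)
  obtain ⟨D, ⟨⟨v, hD⟩, hyD⟩, hmin⟩ := exists_minimal_of_wellFoundedLT
    (fun D => (∃ v, IsLobe G (W.erase x) D v) ∧ y ∉ D) ⟨_, ⟨y, hrest⟩, Finset.notMem_erase _ _⟩
  have hDW : D ⊆ W := hD.subset.trans (Finset.erase_subset _ _)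
  have hxD : x ∉ D := fun hx => Finset.notMem_erase x W (hD.subset hx)
  obtain ⟨a, ha, b, hb, hbD, hbx, hab⟩ := h.exists_adj_ne D hDW hD.nonempty hxD hyD x
  obtain rfl : b = v := hD.eq_of_adj a ha b (Finset.mem_erase.2 ⟨hbx, hb⟩) hbD hab
  obtain ⟨a', ha', b', hb', hbD', hbv', hab'⟩ := h.exists_adj_ne D hDW hD.nonempty hxD hyD b
  have hbx' : b' = x := by
    by_contra hne
    exact hbv' (hD.eq_of_adj a' ha' b' (Finset.mem_erase.2 ⟨hne, hb'⟩) hbD' hab')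
  refine ⟨D, b, hD, hyD, Finset.mem_erase.2 ⟨hbx, hb⟩, ⟨a', ha', hbx' ▸ hab'⟩, ⟨a, ha, hab⟩,
    fun E hED u hE => hED.not_subset (hmin ⟨⟨u, hE⟩, fun hyE => hyD (hED.subset hyE)⟩ hED.subset)⟩

theorem exists_hasPathIn_sdiff (h : TwoConnectedPlus G W x y) (hD : IsLobe G (W.erase x) D v)
    (hyD : y ∉ D) (hv : v ∈ W.erase x) :
    ∃ n, HasPathIn G ↑(W.erase x \ D) v y n := by
  refine _root_.exists_hasPathIn (Finset.mem_sdiff.2 ⟨hv, hD.notMem⟩) fun F hF hvF hyF => ?_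
  have hxF : x ∉ F := fun hx => Finset.notMem_erase x W (Finset.mem_sdiff.1 (hF hx)).1
  obtain ⟨a, ha, b, hb, hbFD, hbx, hab⟩ := h.exists_adj_ne (F ∪ D)
    (Finset.union_subset ((hF.trans Finset.sdiff_subset).trans (Finset.erase_subset _ _))
      (hD.subset.trans (Finset.erase_subset _ _))) ⟨v, Finset.mem_union_left _ hvF⟩
    (by simpa [hxF] using fun hx => Finset.notMem_erase x W (hD.subset hx))
    (by simp [hyF, hyD]) x
  rw [Finset.notMem_union] at hbFD
  have hbW : b ∈ W.erase x := Finset.mem_erase.2 ⟨hbx, hb⟩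
  refine ⟨a, ?_, b, Finset.mem_sdiff.2 ⟨hbW, hbFD.2⟩, hbFD.1, hab⟩
  refine (Finset.mem_union.1 ha).resolve_right fun haD => hbFD.1 ?_
  rwa [hD.eq_of_adj a haD b hbW hbFD.2 hab]

variable [DecidableRel G.Adj]

theorem card_filter_adj_le (hD : IsLobe G (W.erase x) D v) {w : V} (hw : w ∈ D) :
    (W.filter (G.Adj w)).card ≤ ((insert v D).filter (G.Adj w)).card + 1 := by
  refine (Finset.card_le_card fun b hb => ?_).trans (Finset.card_insert_le x _)
  obtain ⟨hbW, hwb⟩ := Finset.mem_filter.1 hb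
  by_cases hbx : b = x
  · exact Finset.mem_insert.2 (.inl hbx)
  · exact Finset.mem_insert_of_mem (Finset.mem_filter.2
      ⟨hD.mem_insert_of_adj hw (Finset.mem_erase.2 ⟨hbx, hbW⟩) hwb, hwb⟩)

end TwoConnectedPlus

variable [DecidableRel G.Adj]

theorem TwoConnectedPlus.exists_long_path {k : ℕ} (h : TwoConnectedPlus G W x y)
    (hdeg : ∀ w ∈ W, w ≠ x → w ≠ y → k ≤ (W.filter (G.Adj w)).card) (hk : k ≤ 1 ∨ 3 ≤ W.card) :
    ∃ n, k ≤ n ∧ HasPathIn G W x y n := by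
  classical
  induction k generalizing W x y with
  | zero =>
    obtain ⟨n, -, hn⟩ := h.exists_hasPathIn
    exact ⟨n, n.zero_le, hn⟩
  | succ k ih =>
    rcases hk with hk | hW
    · obtain ⟨n, hn0, hn⟩ := h.exists_hasPathIn
      exact ⟨n, by omega, hn⟩
    obtain ⟨D, v, hD, hyD, hv, ⟨z, hz, hzx⟩, hDv, hmin⟩ := h.exists_isLobe hW
    have hDW : D ⊆ W := hD.subset.trans (Finset.erase_subset _ _)
    have hxD : x ∉ D := fun hx => Finset.notMem_erase x W (hD.subset hx)
    have hdegD : ∀ w ∈ D, k ≤ ((insert v D).filter (G.Adj w)).card := fun w hw => by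
      have := hdeg w (hDW hw) (ne_of_mem_of_not_mem hw hxD) (ne_of_mem_of_not_mem hw hyD)
      have := TwoConnectedPlus.card_filter_adj_le hD hw
      omega
    have hzv : k ≤ 1 ∨ 3 ≤ (insert v D).card := by
      have hsub : (insert v D).filter (G.Adj z) ⊆ (insert v D).erase z := fun w hw =>
        Finset.mem_erase.2 ⟨(Finset.mem_filter.1 hw).2.ne', (Finset.mem_filter.1 hw).1⟩
      have := (hdegD z hz).trans (Finset.card_le_card hsub)
      rw [Finset.card_erase_of_mem (Finset.mem_insert_of_mem hz)] at this
      omega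
    obtain ⟨m, hm, hpath⟩ := ih (hD.twoConnectedPlus hmin hDv hz)
      (fun w hw _ hwv => hdegD w (Finset.mem_of_mem_insert_of_ne hw hwv)) hzv
    obtain ⟨n, hn⟩ := h.exists_hasPathIn_sdiff hD hyD hv
    refine ⟨m + n + 1, by omega, ((hpath.glue hn ?_).cons hzx.symm ?_).mono ?_⟩
    · rintro w ⟨hw, hw'⟩
      exact (Finset.mem_insert.1 hw).resolve_right (Finset.mem_sdiff.1 hw').2
    · simp [hxD, (Finset.ne_of_mem_erase hv).symm]
    · rw [← Finset.coe_union, ← Finset.coe_insert, Finset.coe_subset]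
      have hvW := Finset.mem_of_mem_erase hv
      grind [h.left_mem]

end LongPaths

section Cycles

variable {G : SimpleGraph V}

/-- A cycle of `G` of length `len`, parametrized periodically by the integers so that arithmetic
along the cycle needs no reduction modulo `len`. -/
structure CyclicWalk (G : SimpleGraph V) where
  /-- The vertex at a given position. -/
  toFun : ℤ → V
  /-- The length of the cycle. -/
  len : ℕ
  three_le : 3 ≤ len
  adj_succ : ∀ i, G.Adj (toFun i) (toFun (i + 1))
  eq_iff : ∀ i j, toFun i = toFun j ↔ (len : ℤ) ∣ i - j

namespace CyclicWalk

instance : CoeFun (CyclicWalk G) fun _ => ℤ → V := ⟨toFun⟩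

variable {C : CyclicWalk G} {p q p' q' : ℤ} {u v : V}

/-- The same cycle traversed backwards. -/
def neg (C : CyclicWalk G) : CyclicWalk G where
  toFun i := C (-i)
  len := C.len
  three_le := C.three_le
  adj_succ i := by simpa using (C.adj_succ (-(i + 1))).symm
  eq_iff i j := by rw [C.eq_iff, ← dvd_neg, neg_sub_neg, neg_sub]

theorem apply_add_len (C : CyclicWalk G) (i : ℤ) : C (i + C.len) = C i := by
  simp [C.eq_iff]

theorem eq_of_apply_eq (h : C p = C q) (h₁ : p - q < C.len) (h₂ : q - p < C.len) : p = q :=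
  sub_eq_zero.1 <| Int.eq_zero_of_abs_lt_dvd ((C.eq_iff p q).1 h) (abs_lt.2 ⟨by omega, h₁⟩)

theorem exists_apply_add_eq (C : CyclicWalk G) (p q : ℤ) :
    ∃ k : ℕ, k < C.len ∧ C (p + k) = C q := by
  have hlen : (0 : ℤ) < C.len := by have := C.three_le; omega
  have h₀ := Int.emod_nonneg (q - p) hlen.ne'
  have h₁ := Int.emod_lt_of_pos (q - p) hlen
  refine ⟨((q - p) % C.len).toNat, by omega, ?_⟩
  rw [C.eq_iff, Int.toNat_of_nonneg h₀]
  exact ⟨-((q - p) / C.len), by linarith [Int.emod_add_mul_ediv (q - p) C.len]⟩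

theorem exists_pos_apply_add_eq (h : C p ≠ C q) :
    ∃ k : ℕ, 0 < k ∧ k < C.len ∧ C (p + k) = C q := by
  obtain ⟨k, hk, hkq⟩ := C.exists_apply_add_eq p q
  refine ⟨k, Nat.pos_of_ne_zero ?_, hk, hkq⟩
  rintro rfl
  exact h (by simpa using hkq)

theorem hasPathIn_image_Icc_add {k : ℕ} (p : ℤ) (hk : k < C.len) :
    HasPathIn G (C '' Set.Icc p (p + k)) (C p) (C (p + k)) k := by
  induction k with
  | zero => simpa using HasPathIn.singleton (C p)
  | succ k ih =>
    have hadj : G.Adj (C (p + (k + 1 : ℕ))) (C (p + k)) := by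
      simpa [add_assoc] using (C.adj_succ (p + k)).symm
    refine ((ih (by omega)).reverse.cons hadj ?_).reverse.mono (Set.insert_subset ?_ ?_)
    · rintro ⟨i, ⟨hpi, hik⟩, hi⟩
      have := C.eq_of_apply_eq hi (by omega) (by omega)
      omega
    · exact ⟨_, ⟨by omega, le_rfl⟩, rfl⟩
    · exact Set.image_mono (Set.Icc_subset_Icc_right (by omega))

theorem hasPathIn_image_Icc (hpq : p ≤ q) (hq : q < p + C.len) :
    HasPathIn G (C '' Set.Icc p q) (C p) (C q) (q - p).toNat := by
  obtain ⟨k, rfl⟩ : ∃ k : ℕ, q = p + k := ⟨(q - p).toNat, by omega⟩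
  simpa using hasPathIn_image_Icc_add p (by omega)

theorem disjoint_image_Icc (h : q < p') (h' : q' < p + C.len) :
    Disjoint (C '' Set.Icc p q) (C '' Set.Icc p' q') := by
  refine Set.disjoint_left.2 ?_
  rintro _ ⟨i, ⟨hpi, hiq⟩, rfl⟩ ⟨j, ⟨hpj, hjq⟩, hij⟩
  have := C.eq_of_apply_eq hij (by omega) (by omega)
  omega

/-- No cycle of `G` is longer than `C`. -/
def IsLongest (C : CyclicWalk G) : Prop :=
  ∀ ⦃v : V⦄ (w : G.Walk v v), w.IsCycle → w.length ≤ C.len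

namespace IsLongest

variable {W W' : Set V} {s t s' t' : V} {m n : ℕ} {p₀ p₁ p₂ p₃ : ℤ}

theorem neg (hC : C.IsLongest) : C.neg.IsLongest := hC

theorem succ_le_len (hC : C.IsLongest) (h : HasPathIn G W s t n) (hts : G.Adj t s) (hn : 2 ≤ n) :
    n + 1 ≤ C.len := by
  obtain ⟨w, hw, hwn⟩ := h.exists_isCycle hts hn
  exact hwn ▸ hC w hw

theorem add_two_le_gap (hC : C.IsLongest) (h : HasPathIn G W s t n)
    (hW : Disjoint W (Set.range C)) (hpq : p < q) (hq : q < p + C.len)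
    (hs : G.Adj (C p) s) (ht : G.Adj (C q) t) : (n : ℤ) + 2 ≤ q - p := by
  have hseg := C.hasPathIn_image_Icc (p := q) (q := p + C.len) (by omega) (by omega)
  rw [C.apply_add_len] at hseg
  have := hC.succ_le_len (hseg.join h (hW.symm.mono_left (Set.image_subset_range _ _)) hs) ht.symm
  omega

theorem hasPathIn_segments (h : HasPathIn G W s t n) (hW : Disjoint W (Set.range C))
    (h₀₁ : p₀ < p₁) (h₁₂ : p₁ ≤ p₂) (h₂₃ : p₂ < p₃) (h₃₀ : p₃ < p₀ + C.len)
    (hs : G.Adj (C p₀) s) (ht : G.Adj (C p₂) t) :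
    HasPathIn G ((C '' Set.Icc p₃ (p₀ + C.len) ∪ W) ∪ C '' Set.Icc p₁ p₂) (C p₃) (C p₁)
      ((p₀ + C.len - p₃).toNat + n + 1 + (p₂ - p₁).toNat + 1) := by
  have hseg := C.hasPathIn_image_Icc (p := p₃) (q := p₀ + C.len) (by omega) (by omega)
  rw [C.apply_add_len] at hseg
  refine (hseg.join h (hW.symm.mono_left (Set.image_subset_range _ _)) hs).join
    (C.hasPathIn_image_Icc h₁₂ (by omega)).reverse ?_ ht.symm
  exact Set.disjoint_union_left.2 ⟨(C.disjoint_image_Icc h₂₃ (by omega)).symm,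
    hW.mono_right (Set.image_subset_range _ _)⟩

theorem add_three_le_of_chord (hC : C.IsLongest) (h : HasPathIn G W s t n)
    (hW : Disjoint W (Set.range C))
    (h₀₁ : p₀ < p₁) (h₁₂ : p₁ ≤ p₂) (h₂₃ : p₂ < p₃) (h₃₀ : p₃ < p₀ + C.len)
    (hs : G.Adj (C p₀) s) (ht : G.Adj (C p₂) t) (hchord : G.Adj (C p₁) (C p₃)) :
    (n : ℤ) + 3 + (p₂ - p₁) ≤ p₃ - p₀ := by
  have := hC.succ_le_len (hasPathIn_segments h hW h₀₁ h₁₂ h₂₃ h₃₀ hs ht) hchord (by omega)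
  omega

theorem add_four_le_of_crossing (hC : C.IsLongest) (h : HasPathIn G W s t n)
    (hW : Disjoint W (Set.range C)) (h' : HasPathIn G W' s' t' m)
    (hW' : Disjoint W' (Set.range C)) (hWW' : Disjoint W W')
    (h₀₁ : p₀ < p₁) (h₁₂ : p₁ ≤ p₂) (h₂₃ : p₂ < p₃) (h₃₀ : p₃ < p₀ + C.len)
    (hs : G.Adj (C p₀) s) (ht : G.Adj (C p₂) t) (hs' : G.Adj (C p₁) s') (ht' : G.Adj (C p₃) t') :
    (n : ℤ) + m + 4 + (p₂ - p₁) ≤ p₃ - p₀ := by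
  have hseg := hasPathIn_segments h hW h₀₁ h₁₂ h₂₃ h₃₀ hs ht
  have hdisj : Disjoint ((C '' Set.Icc p₃ (p₀ + C.len) ∪ W) ∪ C '' Set.Icc p₁ p₂) W' := by
    simp only [Set.disjoint_union_left]
    exact ⟨⟨hW'.symm.mono_left (Set.image_subset_range _ _), hWW'⟩,
      hW'.symm.mono_left (Set.image_subset_range _ _)⟩
  have := hC.succ_le_len (hseg.join h' hdisj hs') ht'.symm (by omega)
  omega

end IsLongest

section Vertices

variable [DecidableEq V]

/-- The vertex set of the cycle. -/
def verts (C : CyclicWalk G) : Finset V := (Finset.range C.len).image fun i : ℕ => C i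

theorem mem_verts : v ∈ C.verts ↔ ∃ i, C i = v := by
  simp only [verts, Finset.mem_image, Finset.mem_range]
  constructor
  · rintro ⟨i, -, hi⟩
    exact ⟨i, hi⟩
  · rintro ⟨i, rfl⟩
    simpa using C.exists_apply_add_eq 0 i

theorem apply_mem_verts (C : CyclicWalk G) (i : ℤ) : C i ∈ C.verts := mem_verts.2 ⟨i, rfl⟩

theorem card_verts (C : CyclicWalk G) : C.verts.card = C.len := by
  rw [verts, Finset.card_image_of_injOn, Finset.card_range]
  intro i hi j hj hij
  simp only [Finset.coe_range, Set.mem_Iio] at hi hj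
  exact_mod_cast C.eq_of_apply_eq hij (by omega) (by omega)

end Vertices

/-- The vertex `k` steps after `v` on the cycle; meaningful only for `v` on the cycle. -/
noncomputable def rot (C : CyclicWalk G) (k : ℤ) (v : V) : V := C (Function.invFun C v + k)

theorem rot_apply (C : CyclicWalk G) (k i : ℤ) : C.rot k (C i) = C (i + k) := by
  have h : C (Function.invFun C (C i)) = C i := Function.invFun_eq ⟨i, rfl⟩
  rw [rot, C.eq_iff, add_sub_add_right_eq_sub]
  exact (C.eq_iff _ _).1 h

section Gap

variable {U Z : Set V}

/-- The number of steps along the cycle from `u` to the next vertex of `U`, which may be `u` itself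
after a full turn; `0` if `U` has no vertex on the cycle. -/
noncomputable def gap (C : CyclicWalk G) (U : Set V) (u : V) : ℕ :=
  sInf {k : ℕ | 0 < k ∧ C.rot k u ∈ U}

/-- The next vertex of `U` after `u` on the cycle. -/
noncomputable def next (C : CyclicWalk G) (U : Set V) (u : V) : V := C.rot (C.gap U u) u

theorem next_apply (C : CyclicWalk G) (U : Set V) (p : ℤ) :
    C.next U (C p) = C (p + C.gap U (C p)) :=
  C.rot_apply _ p

theorem gap_le {k : ℕ} (hk : 0 < k) (hkU : C (p + k) ∈ U) : C.gap U (C p) ≤ k :=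
  Nat.sInf_le ⟨hk, by rwa [C.rot_apply]⟩

theorem gap_spec (h : C q ∈ U) :
    0 < C.gap U (C p) ∧ C (p + C.gap U (C p)) ∈ U := by
  obtain ⟨k, -, hkq⟩ := C.exists_apply_add_eq p q
  have : C.gap U (C p) ∈ {k : ℕ | 0 < k ∧ C.rot k (C p) ∈ U} := by
    refine Nat.sInf_mem ⟨k + C.len, by have := C.three_le; omega, ?_⟩
    rw [C.rot_apply, Nat.cast_add, ← add_assoc, C.apply_add_len, hkq]
    exact h
  simpa only [Set.mem_ofPred_eq, C.rot_apply] using this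

theorem next_mem (h : C q ∈ U) : C.next U (C p) ∈ U :=
  C.next_apply U p ▸ (gap_spec h).2

theorem notMem_of_lt_gap {k : ℤ} (hk : 0 < k) (hkg : k < C.gap U (C p)) : C (p + k) ∉ U := by
  intro hkU
  lift k to ℕ using hk.le
  have := gap_le (p := p) (by omega) hkU
  omega

theorem gap_lt_len (h : C q ∈ U) (hpq : C p ≠ C q) : C.gap U (C p) < C.len := by
  obtain ⟨k, hk, hklen, hkq⟩ := C.exists_pos_apply_add_eq hpq
  exact (gap_le hk (hkq ▸ h)).trans_lt hklen

theorem exists_next_mem {r : ℤ} (hp : C p ∈ U \ Z) (hr : C r ∈ Z) (hZ : Z ⊆ U) :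
    ∃ u ∈ U \ Z, C.next U u ∈ Z := by
  obtain ⟨k, -, hk⟩ := C.exists_apply_add_eq p r
  induction k using Nat.strong_induction_on generalizing p with
  | _ k ih =>
    obtain ⟨hg₀, hgU⟩ := gap_spec (p := p) hp.1
    have hk₀ : 0 < k := Nat.pos_of_ne_zero fun h0 => hp.2 (by simpa [h0, ← hk] using hr)
    have hgk : C.gap U (C p) ≤ k := gap_le hk₀ (hk ▸ hZ hr)
    by_cases hgZ : C (p + C.gap U (C p)) ∈ Z
    · exact ⟨C p, hp, C.next_apply U p ▸ hgZ⟩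
    · refine ih (k - C.gap U (C p)) (by omega) ⟨hgU, hgZ⟩ ?_
      rw [← hk]
      congr 1
      omega

theorem eq_of_lt_gap (hp : C p ∈ U) {k l : ℕ} (hkl : k ≤ l) (hl : l < C.gap U (C q))
    (h : C (p + k) = C (q + l)) : C p = C q ∧ k = l := by
  have hpq : C p = C (q + (l - k : ℕ)) := by
    rw [C.eq_iff] at h ⊢
    convert h using 1
    omega
  rcases hkl.eq_or_lt with rfl | hkl
  · exact ⟨by simpa using hpq, rfl⟩
  · exact (notMem_of_lt_gap (by omega) (by omega) (hpq ▸ hp)).elim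

end Gap

theorem sum_gap_le_len {U : Finset V} (hU : ∀ u ∈ U, ∃ i, C i = u) :
    ∑ u ∈ U, C.gap U u ≤ C.len := by
  classical
  rw [← card_verts, ← Finset.sum_congr rfl fun u _ => Finset.card_range (C.gap U u),
    ← Finset.card_sigma]
  refine Finset.card_le_card_of_injOn (fun x => C.rot x.2 x.1) ?_ ?_
  · rintro ⟨u, k⟩ hx
    obtain ⟨p, rfl⟩ := hU u (Finset.mem_sigma.1 hx).1
    simpa only [C.rot_apply, Finset.mem_coe] using C.apply_mem_verts (p + k)
  · rintro ⟨u, k⟩ hx ⟨u', k'⟩ hx' he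
    obtain ⟨hu, hk⟩ := Finset.mem_sigma.1 hx
    obtain ⟨hu', hk'⟩ := Finset.mem_sigma.1 hx'
    obtain ⟨p, rfl⟩ := hU u hu
    obtain ⟨q, rfl⟩ := hU u' hu'
    simp only [Finset.mem_range, C.rot_apply] at hk hk' he
    rcases le_total k k' with h | h
    · obtain ⟨h₁, rfl⟩ := eq_of_lt_gap hu h hk' he
      rw [h₁]
    · obtain ⟨h₁, rfl⟩ := eq_of_lt_gap hu' h hk he.symm
      rw [h₁]

end CyclicWalk

end Cycles

section Components

variable {G : SimpleGraph V}

/-- No set of fewer than `k` vertices separates `G`: whatever the set `S` with fewer than `k`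
vertices, some edge of `G - S` leaves each nonempty proper vertex set `F` of `G - S`. -/
def NoSmallCut (G : SimpleGraph V) (k : ℕ) : Prop :=
  ∀ S F : Finset V, S.card < k → F.Nonempty → Disjoint F S → (∃ v, v ∉ F ∧ v ∉ S) →
    ∃ a ∈ F, ∃ b, b ∉ F ∧ b ∉ S ∧ G.Adj a b

theorem NoSmallCut.mono {k l : ℕ} (h : NoSmallCut G l) (hkl : k ≤ l) : NoSmallCut G k :=
  fun S F hS => h S F (hS.trans_le hkl)

theorem NoSmallCut.le_card {k : ℕ} (h : NoSmallCut G k) {F T : Finset V} (hF : F.Nonempty)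
    (hFT : Disjoint F T) (hT : ∀ a ∈ F, ∀ b, b ∉ F → G.Adj a b → b ∈ T)
    (hv : ∃ v, v ∉ F ∧ v ∉ T) : k ≤ T.card := by
  by_contra! hlt
  obtain ⟨a, ha, b, hb, hbT, hab⟩ := h T F hlt hF hFT hv
  exact hbT (hT a ha b hb hab)

namespace CyclicWalk

variable {C : CyclicWalk G} {H K : Finset V} {p q : ℤ} {u v x y : V}

/-- `H` is the vertex set of a connected component of the graph left after deleting the cycle;
connectedness is expressed through the edges that leave the proper subsets of `H`. -/
structure IsComponent (C : CyclicWalk G) (H : Finset V) : Prop where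
  nonempty : H.Nonempty
  disjoint : Disjoint (H : Set V) (Set.range C)
  mem_or_mem_range : ∀ v ∈ H, ∀ w, G.Adj v w → w ∈ H ∨ w ∈ Set.range C
  exists_adj : ∀ F ⊆ H, F.Nonempty → F ≠ H → ∃ a ∈ F, ∃ b ∈ H, b ∉ F ∧ G.Adj a b

theorem exists_isComponent [Finite V] {U : Finset V}
    (hU : ∀ v ∈ U, ∀ w, G.Adj v w → w ∈ U ∨ w ∈ Set.range C)
    (hcover : ¬ ∀ v, v ∈ U ∨ v ∈ Set.range C) : ∃ H, Disjoint U H ∧ C.IsComponent H := by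
  classical
  cases nonempty_fintype V
  set K : Finset V := {v | ¬ (v ∈ U ∨ v ∈ Set.range C)}
  have hK : ∀ v, v ∈ K ↔ ¬ (v ∈ U ∨ v ∈ Set.range C) := fun v => Finset.mem_filter_univ v
  have hKcl : ∀ v ∈ K, ∀ w, G.Adj v w → w ∈ K ∨ w ∈ Set.range C := fun v hv w hvw =>
    (em (w ∈ Set.range C)).symm.imp_left fun hw => (hK w).2 fun hw' =>
      (hK v).1 hv (hU w (hw'.resolve_right hw) v hvw.symm)
  obtain ⟨H, ⟨hHK, hH, hHcl⟩, hmin⟩ := exists_minimal_of_wellFoundedLT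
    (fun H => H ⊆ K ∧ H.Nonempty ∧ ∀ v ∈ H, ∀ w, G.Adj v w → w ∈ H ∨ w ∈ Set.range C)
    ⟨K, subset_rfl, (not_forall.1 hcover).imp fun v => (hK v).2, hKcl⟩
  have hHK' : ∀ v ∈ H, v ∉ U ∧ v ∉ Set.range C := fun v hv => not_or.1 ((hK v).1 (hHK hv))
  refine ⟨H, Finset.disjoint_right.2 fun v hv => (hHK' v hv).1, hH,
    Set.disjoint_left.2 fun v hv => (hHK' v hv).2, hHcl, fun F hF hFn hFH => ?_⟩
  by_contra! hcon
  refine hFH (hF.antisymm (hmin ⟨hF.trans hHK, hFn, fun v hv w hvw => ?_⟩ hF))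
  exact (hHcl v (hF hv) w hvw).imp_left fun hw => by_contra fun hwF => hcon v hv w hw hwF hvw

namespace IsComponent

theorem apply_ne (hH : C.IsComponent H) (hv : v ∈ H) (i : ℤ) : C i ≠ v :=
  fun h => Set.disjoint_left.1 hH.disjoint hv ⟨i, h⟩

theorem exists_hasPathIn (hH : C.IsComponent H) (hx : x ∈ H) (hy : y ∈ H) :
    ∃ n, HasPathIn G H x y n :=
  _root_.exists_hasPathIn hx fun F hF hxF hyF =>
    hH.exists_adj F hF ⟨x, hxF⟩ (ne_of_mem_of_not_mem' hy hyF).symm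

end IsComponent

section Attach

variable [DecidableEq V] [DecidableRel G.Adj]

/-- The vertices of the cycle that have a neighbour in `D`. -/
def attach (C : CyclicWalk G) (D : Finset V) : Finset V := {u ∈ C.verts | ∃ v ∈ D, G.Adj u v}

variable {D D' : Finset V}

theorem mem_attach : u ∈ C.attach D ↔ (∃ i, C i = u) ∧ ∃ v ∈ D, G.Adj u v := by
  rw [attach, Finset.mem_filter, mem_verts]

theorem apply_mem_attach : C p ∈ C.attach D ↔ ∃ v ∈ D, G.Adj (C p) v := by
  simp [mem_attach]

theorem exists_apply_eq_of_mem_attach (h : u ∈ C.attach D) : ∃ i, C i = u := (mem_attach.1 h).1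

theorem attach_mono (h : D ⊆ D') : C.attach D ⊆ C.attach D' := fun _ hu =>
  mem_attach.2 ((mem_attach.1 hu).imp_right fun ⟨v, hv, huv⟩ => ⟨v, h hv, huv⟩)

end Attach

/-- The image of `U` under moving `k` steps along the cycle. -/
noncomputable def shift [DecidableEq V] (C : CyclicWalk G) (k : ℤ) (U : Finset V) : Finset V :=
  U.image (C.rot k)

section Shift

variable [DecidableEq V] {U : Finset V} {k : ℤ}

theorem mem_shift (hU : ∀ u ∈ U, ∃ i, C i = u) :
    v ∈ C.shift k U ↔ ∃ p, C p ∈ U ∧ C (p + k) = v := by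
  rw [shift, Finset.mem_image]
  constructor
  · rintro ⟨u, hu, rfl⟩
    obtain ⟨p, rfl⟩ := hU u hu
    exact ⟨p, hu, (C.rot_apply k p).symm⟩
  · rintro ⟨p, hp, rfl⟩
    exact ⟨C p, hp, C.rot_apply k p⟩

theorem card_shift (hU : ∀ u ∈ U, ∃ i, C i = u) (k : ℤ) : (C.shift k U).card = U.card := by
  refine Finset.card_image_of_injOn fun u hu v hv huv => ?_
  obtain ⟨p, rfl⟩ := hU u hu
  obtain ⟨q, rfl⟩ := hU v hv
  rw [C.rot_apply, C.rot_apply, C.eq_iff] at huv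
  rwa [C.eq_iff, ← add_sub_add_right_eq_sub]

theorem shift_subset_verts (hU : ∀ u ∈ U, ∃ i, C i = u) (k : ℤ) : C.shift k U ⊆ C.verts :=
  fun _ hv => by
    obtain ⟨p, -, rfl⟩ := (mem_shift hU).1 hv
    exact C.apply_mem_verts _

theorem shift_zero (hU : ∀ u ∈ U, ∃ i, C i = u) : C.shift 0 U = U := by
  ext v
  rw [mem_shift hU]
  constructor
  · rintro ⟨p, hp, rfl⟩
    rwa [add_zero]
  · intro hv
    obtain ⟨p, rfl⟩ := hU v hv
    exact ⟨p, hv, by rw [add_zero]⟩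

end Shift

namespace IsComponent

variable [DecidableEq V] [DecidableRel G.Adj]

theorem two_le_gap (hC : C.IsLongest) (hH : C.IsComponent H) (hp : C p ∈ C.attach H)
    (hq : C q ∈ C.attach H) (hpq : p < q) (hqp : q < p + C.len) : 2 ≤ q - p := by
  obtain ⟨x, hx, hpx⟩ := apply_mem_attach.1 hp
  obtain ⟨y, hy, hqy⟩ := apply_mem_attach.1 hq
  obtain ⟨n, hn⟩ := hH.exists_hasPathIn hx hy
  have := hC.add_two_le_gap hn hH.disjoint hpq hqp hpx hqy
  omega

theorem apply_succ_notMem_attach (hC : C.IsLongest) (hH : C.IsComponent H)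
    (hp : C p ∈ C.attach H) : C (p + 1) ∉ C.attach H := fun h => by
  have := C.three_le
  have := hH.two_le_gap hC hp h (by omega) (by omega)
  omega

theorem exists_notMem_attach (hC : C.IsLongest) (hH : C.IsComponent H) :
    ∃ i, C i ∉ C.attach H := by
  by_cases h : C 0 ∈ C.attach H
  · exact ⟨_, hH.apply_succ_notMem_attach hC h⟩
  · exact ⟨0, h⟩

theorem le_card_attach {k : ℕ} (hC : C.IsLongest) (hG : NoSmallCut G k) (hH : C.IsComponent H) :
    k ≤ (C.attach H).card := by
  refine hG.le_card hH.nonempty (Finset.disjoint_left.2 fun v hv hv' => ?_)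
    (fun a ha b hb hab => ?_) ?_
  · obtain ⟨i, hi⟩ := exists_apply_eq_of_mem_attach hv'
    exact hH.apply_ne hv i hi
  · exact mem_attach.2 ⟨(hH.mem_or_mem_range a ha b hab).resolve_left hb, a, ha, hab.symm⟩
  · obtain ⟨i, hi⟩ := hH.exists_notMem_attach hC
    exact ⟨C i, fun h => hH.apply_ne h i rfl, hi⟩

theorem not_adj_succ_succ (hC : C.IsLongest) (hH : C.IsComponent H) (hp : C p ∈ C.attach H)
    (hq : C q ∈ C.attach H) : ¬ G.Adj (C (p + 1)) (C (q + 1)) := by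
  intro hadj
  by_cases hpq : C p = C q
  · rw [← C.rot_apply, ← C.rot_apply, hpq] at hadj
    exact G.irrefl hadj
  obtain ⟨k, hk, hklen, hkq⟩ := C.exists_pos_apply_add_eq hpq
  rw [← C.rot_apply 1 q, ← hkq, C.rot_apply] at hadj
  rw [← hkq] at hq
  have hk_succ : (k : ℤ) + 1 ≠ C.len := fun h => by
    refine hH.apply_succ_notMem_attach hC hq ?_
    rwa [add_assoc, h, C.apply_add_len]
  obtain ⟨x, hx, hpx⟩ := apply_mem_attach.1 hp
  obtain ⟨y, hy, hqy⟩ := apply_mem_attach.1 hq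
  obtain ⟨n, hn⟩ := hH.exists_hasPathIn hx hy
  have := hC.add_three_le_of_chord hn hH.disjoint (lt_add_one p) (by omega) (lt_add_one (p + k))
    (by omega) hpx hqy hadj
  omega

end IsComponent

end CyclicWalk

section Counting

variable [Fintype V]

theorem card_le_indepNumber {s : Finset V} (hs : ∀ u ∈ s, ∀ v ∈ s, ¬ G.Adj u v) :
    s.card ≤ indepNumber G :=
  le_csSup ⟨Fintype.card V, by rintro _ ⟨t, -, rfl⟩; exact t.card_le_univ⟩ ⟨s, hs, rfl⟩

namespace CyclicWalk.IsComponent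

variable {C : CyclicWalk G} {H : Finset V} [DecidableEq V] [DecidableRel G.Adj]

theorem card_attach_add_card_le_indepNumber_of_disjoint (hC : C.IsLongest) (hH : C.IsComponent H)
    {I : Finset V} (hI : Disjoint (I : Set V) (Set.range C))
    (hHI : ∀ p, C p ∈ C.attach H → C (p + 1) ∉ C.attach I)
    (hind : ∀ u ∈ I, ∀ v ∈ I, ¬ G.Adj u v) : (C.attach H).card + I.card ≤ indepNumber G := by
  have hN : ∀ u ∈ C.attach H, ∃ i, C i = u := fun _ => exists_apply_eq_of_mem_attach
  have hdisj : Disjoint (C.shift 1 (C.attach H)) I := by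
    refine Finset.disjoint_left.2 fun v hv hvI => ?_
    obtain ⟨p, -, rfl⟩ := (mem_shift hN).1 hv
    exact Set.disjoint_left.1 hI hvI ⟨_, rfl⟩
  have hcross : ∀ u ∈ C.shift 1 (C.attach H), ∀ v ∈ I, ¬ G.Adj u v := by
    intro u hu v hv huv
    obtain ⟨p, hp, rfl⟩ := (mem_shift hN).1 hu
    exact hHI p hp (apply_mem_attach.2 ⟨v, hv, huv⟩)
  rw [← card_shift hN 1, ← Finset.card_union_of_disjoint hdisj]
  refine card_le_indepNumber fun u hu v hv => ?_
  rcases Finset.mem_union.1 hu with hu | hu <;> rcases Finset.mem_union.1 hv with hv | hv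
  · obtain ⟨p, hp, rfl⟩ := (mem_shift hN).1 hu
    obtain ⟨q, hq, rfl⟩ := (mem_shift hN).1 hv
    exact hH.not_adj_succ_succ hC hp hq
  · exact hcross u hu v hv
  · exact fun huv => hcross v hv u hu huv.symm
  · exact hind u hu v hv

theorem card_attach_add_card_le_indepNumber (hC : C.IsLongest) (hH : C.IsComponent H)
    {I : Finset V} (hI : I ⊆ H) (hind : ∀ u ∈ I, ∀ v ∈ I, ¬ G.Adj u v) :
    (C.attach H).card + I.card ≤ indepNumber G :=
  hH.card_attach_add_card_le_indepNumber_of_disjoint hC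
    (hH.disjoint.mono_left (Finset.coe_subset.2 hI))
    (fun _ hp h => hH.apply_succ_notMem_attach hC hp (attach_mono hI h)) hind

theorem minDegree_le (hH : C.IsComponent H) {v : V} (hv : v ∈ H) :
    G.minDegree ≤ (H.filter (G.Adj v)).card + (C.attach {v}).card := by
  refine (G.minDegree_le_degree v).trans
    ((Finset.card_le_card fun w hw => ?_).trans (Finset.card_union_le _ _))
  have hvw : G.Adj v w := (G.mem_neighborFinset v w).1 hw
  rw [Finset.mem_union, Finset.mem_filter]
  exact (hH.mem_or_mem_range v hv w hvw).imp (fun hw => ⟨hw, hvw⟩)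
    fun hw => mem_attach.2 ⟨hw, v, Finset.mem_singleton_self v, hvw.symm⟩

end CyclicWalk.IsComponent

end Counting

end Components

section TwoConnectedComponent

variable {G : SimpleGraph V}

/-- A lobe `D` with attaching vertex `v` which does not exhaust `W`, so that `v` separates `D` from
some other vertex of `W`. -/
structure IsProperLobe (G : SimpleGraph V) (W D : Finset V) (v : V) : Prop
    extends IsLobe G W D v where
  exists_notMem : ∃ w ∈ W, w ∉ D ∧ w ≠ v

theorem card_filter_adj_of_isClique [DecidableRel G.Adj] {H : Finset V} {v : V}
    (hH : G.IsClique (H : Set V)) (hv : v ∈ H) :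
    (H.filter (G.Adj v)).card = H.card - 1 := by
  classical
  rw [← Finset.card_erase_of_mem hv]
  congr 1
  ext w
  rw [Finset.mem_filter, Finset.mem_erase, and_comm]
  exact and_congr_left fun hw => ⟨fun h => h.ne', fun h => hH hv hw h.symm⟩

namespace CyclicWalk

variable {C : CyclicWalk G} {H : Finset V} {p : ℤ} {u v x y : V} {k : ℕ}

theorem IsComponent.exists_long_path [DecidableRel G.Adj] (hH : C.IsComponent H)
    (hlobe : ∀ D v, ¬ IsProperLobe G H D v) (h3 : 3 ≤ H.card) (hx : x ∈ H) (hy : y ∈ H)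
    (hxy : x ≠ y) (hk : ∀ v ∈ H, v ≠ x → v ≠ y → k ≤ (H.filter (G.Adj v)).card) :
    ∃ n, k ≤ n ∧ HasPathIn G H x y n := by
  refine TwoConnectedPlus.exists_long_path ⟨hx, hy, hxy, fun F hF hFn hxF hyF u => ?_,
    fun F hF hxF hyF => hH.exists_adj F hF ⟨x, hxF⟩ (ne_of_mem_of_not_mem' hy hyF).symm⟩ hk
    (.inr h3)
  by_cases hu : u ∈ F
  · obtain ⟨a, ha, b, hb, hbF, hab⟩ := hH.exists_adj F hF hFn (ne_of_mem_of_not_mem' hx hxF).symm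
    exact ⟨a, ha, b, hb, hbF, (ne_of_mem_of_not_mem hu hbF).symm, hab⟩
  · by_contra! hcon
    refine hlobe F u ⟨⟨hF, hFn, hu, fun a ha b hb hbF hab => ?_⟩, ?_⟩
    · by_contra hbu
      exact hcon a ha b hb hbF hbu hab
    · by_cases hxu : x = u
      · exact ⟨y, hy, hyF, fun h => hxy (hxu.trans h.symm)⟩
      · exact ⟨x, hx, hxF, hxu⟩

variable [DecidableEq V] [DecidableRel G.Adj]

/-- The vertices of the cycle whose only neighbour in `H` is `x`. -/
def priv (C : CyclicWalk G) (H : Finset V) (x : V) : Finset V :=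
  {u ∈ C.attach H | ∀ v ∈ H, G.Adj u v → v = x}

theorem mem_priv : u ∈ C.priv H x ↔ u ∈ C.attach H ∧ ∀ v ∈ H, G.Adj u v → v = x :=
  Finset.mem_filter

theorem priv_subset_attach : C.priv H x ⊆ C.attach H := Finset.filter_subset _ _

theorem mem_and_adj_of_mem_priv (h : u ∈ C.priv H x) : x ∈ H ∧ G.Adj u x := by
  obtain ⟨hu, hux⟩ := mem_priv.1 h
  obtain ⟨-, v, hv, huv⟩ := mem_attach.1 hu
  exact hux v hv huv ▸ ⟨hv, huv⟩

theorem eq_of_mem_priv (hx : u ∈ C.priv H x) (hy : y ∈ H) (huy : G.Adj u y) : x = y :=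
  ((mem_priv.1 hx).2 y hy huy).symm

theorem pairwiseDisjoint_priv (s : Set V) : s.PairwiseDisjoint (C.priv H) :=
  fun _ _ _ _ hxy => Finset.disjoint_left.2 fun _ hx hy => hxy <|
    have hy := mem_and_adj_of_mem_priv hy
    eq_of_mem_priv hx hy.1 hy.2

/-- The attachments `u` of `H` from which a path through at least two vertices of `H` leads to the
next attachment. -/
noncomputable def bridging (C : CyclicWalk G) (H : Finset V) : Finset V :=
  {u ∈ C.attach H | ∃ x ∈ H, ∃ y ∈ H, x ≠ y ∧ G.Adj u x ∧ G.Adj (C.next (C.attach H) u) y}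

theorem mem_bridging : u ∈ C.bridging H ↔ u ∈ C.attach H ∧
    ∃ x ∈ H, ∃ y ∈ H, x ≠ y ∧ G.Adj u x ∧ G.Adj (C.next (C.attach H) u) y :=
  Finset.mem_filter

theorem bridging_subset_attach : C.bridging H ⊆ C.attach H := Finset.filter_subset _ _

theorem next_mem_attach (hu : u ∈ C.attach H) : C.next (C.attach H) u ∈ C.attach H := by
  obtain ⟨p, rfl⟩ := exists_apply_eq_of_mem_attach hu
  exact next_mem (U := (C.attach H : Set V)) hu

theorem apply_gap_mem_attach (hp : C p ∈ C.attach H) :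
    C (p + C.gap (C.attach H) (C p)) ∈ C.attach H :=
  (gap_spec (U := (C.attach H : Set V)) hp).2

theorem gap_attach_lt_len (hH : 2 ≤ (C.attach H).card) (hu : u ∈ C.attach H) :
    C.gap (C.attach H) u < C.len := by
  obtain ⟨v, hv, hvu⟩ := Finset.exists_mem_ne hH u
  obtain ⟨p, rfl⟩ := exists_apply_eq_of_mem_attach hu
  obtain ⟨q, rfl⟩ := exists_apply_eq_of_mem_attach hv
  exact gap_lt_len (U := (C.attach H : Set V)) hv hvu.symm

theorem exists_mem_priv_of_notMem_bridging (hu : u ∈ C.attach H) (hub : u ∉ C.bridging H) :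
    ∃ x ∈ H, u ∈ C.priv H x ∧ C.next (C.attach H) u ∈ C.priv H x := by
  have hsame : ∀ x ∈ H, ∀ y ∈ H, G.Adj u x → G.Adj (C.next (C.attach H) u) y → x = y :=
    fun x hx y hy hux huy => by_contra fun hne =>
      hub (mem_bridging.2 ⟨hu, x, hx, y, hy, hne, hux, huy⟩)
  obtain ⟨-, x, hx, hux⟩ := mem_attach.1 hu
  obtain ⟨-, y, hy, huy⟩ := mem_attach.1 (next_mem_attach hu)
  obtain rfl := hsame x hx y hy hux huy
  exact ⟨x, hx, mem_priv.2 ⟨hu, fun v hv h => hsame v hv x hx h huy⟩,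
    mem_priv.2 ⟨next_mem_attach hu, fun v hv h => (hsame x hx v hv hux h).symm⟩⟩

theorem mem_bridging_of_mem_priv (hu : u ∈ C.priv H x)
    (hnext : C.next (C.attach H) u ∉ C.priv H x) : u ∈ C.bridging H := by
  by_contra hub
  obtain ⟨y, hy, huy, hny⟩ := exists_mem_priv_of_notMem_bridging (priv_subset_attach hu) hub
  exact hnext (eq_of_mem_priv hu hy (mem_and_adj_of_mem_priv huy).2 ▸ hny)

theorem mem_bridging_of_next_mem_priv (hu : u ∈ C.attach H) (hux : u ∉ C.priv H x)
    (hnext : C.next (C.attach H) u ∈ C.priv H x) : u ∈ C.bridging H := by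
  by_contra hub
  obtain ⟨y, hy, huy, hny⟩ := exists_mem_priv_of_notMem_bridging hu hub
  exact hux (eq_of_mem_priv hnext hy (mem_and_adj_of_mem_priv hny).2 ▸ huy)

theorem card_attach_le_card_bridging_add :
    (C.attach H).card ≤ (C.bridging H).card + ∑ x ∈ H, (C.priv H x).card := by
  refine (Finset.card_le_card fun u hu => ?_).trans ((Finset.card_union_le _ _).trans
    (Nat.add_le_add_left Finset.card_biUnion_le _))
  by_cases hub : u ∈ C.bridging H
  · exact Finset.mem_union_left _ hub
  · obtain ⟨x, hx, hux, -⟩ := exists_mem_priv_of_notMem_bridging hu hub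
    exact Finset.mem_union_right _ (Finset.mem_biUnion.2 ⟨x, hx, hux⟩)

namespace IsComponent

theorem nonempty_attach_sdiff_priv (hC : C.IsLongest) (hG : NoSmallCut G 2) (hH : C.IsComponent H)
    (h2 : 2 ≤ H.card) (x : V) : (C.attach H \ C.priv H x).Nonempty := by
  rw [Finset.sdiff_nonempty]
  intro hsub
  obtain ⟨y, hy, hyx⟩ := Finset.exists_mem_ne h2 x
  refine absurd (hG.le_card (F := H.erase x) (T := {x}) ⟨y, Finset.mem_erase.2 ⟨hyx, hy⟩⟩
    (by simp) (fun a ha b hb hab => ?_) ⟨C 0, ?_, ?_⟩) (by simp)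
  · obtain ⟨hax, haH⟩ := Finset.mem_erase.1 ha
    rcases hH.mem_or_mem_range a haH b hab with hbH | hbC
    · rw [Finset.mem_singleton]
      by_contra hbx
      exact hb (Finset.mem_erase.2 ⟨hbx, hbH⟩)
    · have hb := hsub (mem_attach.2 ⟨hbC, a, haH, hab.symm⟩)
      exact (hax (eq_of_mem_priv hb haH hab.symm).symm).elim
  · exact fun h => hH.apply_ne (Finset.mem_of_mem_erase h) 0 rfl
  · obtain ⟨u, hu⟩ := Finset.card_pos.1 (two_pos.trans_le (hH.le_card_attach hC hG))
    exact fun h => hH.apply_ne (mem_and_adj_of_mem_priv (hsub hu)).1 0 (Finset.mem_singleton.1 h)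

theorem exists_mem_bridging_mem_priv (hC : C.IsLongest) (hG : NoSmallCut G 2)
    (hH : C.IsComponent H) (h2 : 2 ≤ H.card) (hx : (C.priv H x).Nonempty) :
    ∃ u ∈ C.bridging H, u ∈ C.priv H x := by
  obtain ⟨u, hu⟩ := hx
  obtain ⟨v, hv⟩ := hH.nonempty_attach_sdiff_priv hC hG h2 x
  rw [Finset.mem_sdiff] at hv
  obtain ⟨p, rfl⟩ := exists_apply_eq_of_mem_attach (priv_subset_attach hu)
  obtain ⟨q, rfl⟩ := exists_apply_eq_of_mem_attach hv.1
  obtain ⟨w, ⟨hw, hwx⟩, -, hnext⟩ := exists_next_mem (C := C) (p := p) (r := q)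
    (U := (C.attach H : Set V)) (Z := ↑(C.attach H) \ ↑(C.priv H x))
    ⟨priv_subset_attach hu, fun h => h.2 hu⟩ hv Set.sdiff_subset
  have hwx : w ∈ C.priv H x := by_contra fun h => hwx ⟨hw, h⟩
  exact ⟨w, mem_bridging_of_mem_priv hwx hnext, hwx⟩

theorem exists_mem_bridging_next_mem_priv (hC : C.IsLongest) (hG : NoSmallCut G 2)
    (hH : C.IsComponent H) (h2 : 2 ≤ H.card) (hx : (C.priv H x).Nonempty) :
    ∃ u ∈ C.bridging H, C.next (C.attach H) u ∈ C.priv H x := by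
  obtain ⟨u, hu⟩ := hx
  obtain ⟨v, hv⟩ := hH.nonempty_attach_sdiff_priv hC hG h2 x
  rw [Finset.mem_sdiff] at hv
  obtain ⟨p, rfl⟩ := exists_apply_eq_of_mem_attach (priv_subset_attach hu)
  obtain ⟨q, rfl⟩ := exists_apply_eq_of_mem_attach hv.1
  obtain ⟨w, ⟨hw, hwx⟩, hnext⟩ := exists_next_mem (C := C) (p := q) (r := p)
    (U := (C.attach H : Set V)) (Z := C.priv H x) hv hu
    (Finset.coe_subset.2 priv_subset_attach)
  exact ⟨w, mem_bridging_of_next_mem_priv hw hwx hnext, hnext⟩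

theorem exists_cover_card_le_card_bridging (hC : C.IsLongest) (hG : NoSmallCut G 2)
    (hH : C.IsComponent H) (h2 : 2 ≤ H.card) :
    ∃ T ⊆ H ∪ C.attach H, T.card ≤ (C.bridging H).card ∧
      ∀ a ∈ H, ∀ b ∈ C.attach H, G.Adj b a → a ∈ T ∨ b ∈ T := by
  choose! r hrB hrP using fun x hx => hH.exists_mem_bridging_mem_priv (x := x) hC hG h2 hx
  set X : Finset V := {x ∈ H | (C.priv H x).Nonempty}
  have hrX : ∀ x ∈ X, r x ∈ C.priv H x := fun x hx => hrP x (Finset.mem_filter.1 hx).2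
  have hr_inj : Set.InjOn r X := fun x hx y hy hxy => by
    have hry := mem_and_adj_of_mem_priv (hrX y hy)
    exact eq_of_mem_priv (hrX x hx) hry.1 (hxy ▸ hry.2)
  have himage : X.image r ⊆ C.bridging H :=
    Finset.image_subset_iff.2 fun x hx => hrB x (Finset.mem_filter.1 hx).2
  refine ⟨X ∪ (C.bridging H \ X.image r), Finset.union_subset_union (Finset.filter_subset _ _)
    (Finset.sdiff_subset.trans bridging_subset_attach), ?_, fun a ha b hb hba => ?_⟩
  · refine (Finset.card_union_le _ _).trans_eq ?_
    rw [← Finset.card_image_of_injOn hr_inj, add_comm, Finset.card_sdiff_add_card_eq_card himage]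
  · by_cases hb_priv : ∃ x, b ∈ C.priv H x
    · obtain ⟨x, hx⟩ := hb_priv
      obtain rfl := eq_of_mem_priv hx ha hba
      exact .inl (Finset.mem_union_left _ (Finset.mem_filter.2 ⟨ha, b, hx⟩))
    · refine .inr (Finset.mem_union_right _ (Finset.mem_sdiff.2 ⟨?_, fun h => hb_priv ?_⟩))
      · by_contra hbB
        obtain ⟨x, -, hx, -⟩ := exists_mem_priv_of_notMem_bridging hb hbB
        exact hb_priv ⟨x, hx⟩
      · obtain ⟨x, hx, rfl⟩ := Finset.mem_image.1 h
        exact ⟨x, hrX x hx⟩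

theorem le_card_bridging (hC : C.IsLongest) (hk : 2 ≤ k) (hG : NoSmallCut G k)
    (hH : C.IsComponent H) (hkH : k ≤ H.card) : k ≤ (C.bridging H).card := by
  obtain ⟨T, hT, hTcard, hcover⟩ :=
    hH.exists_cover_card_le_card_bridging hC (hG.mono hk) (hk.trans hkH)
  refine le_trans ?_ hTcard
  by_contra! hlt
  refine hlt.not_ge (hG.le_card (F := H \ T) (Finset.sdiff_nonempty_of_card_lt_card (by omega))
    Finset.sdiff_disjoint (fun a ha b hb hab => ?_) ?_)
  · obtain ⟨haH, haT⟩ := Finset.mem_sdiff.1 ha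
    rcases hH.mem_or_mem_range a haH b hab with hbH | hbC
    · exact by_contra fun hbT => hb (Finset.mem_sdiff.2 ⟨hbH, hbT⟩)
    · exact (hcover a haH b (mem_attach.2 ⟨hbC, a, haH, hab.symm⟩) hab.symm).resolve_left haT
  · obtain ⟨i, hi⟩ := hH.exists_notMem_attach hC
    have hiH : C i ∉ H := fun h => hH.apply_ne h i rfl
    exact ⟨C i, fun h => hiH (Finset.mem_sdiff.1 h).1,
      fun h => (Finset.mem_union.1 (hT h)).elim hiH hi⟩

theorem two_le_gap_attach {D : Finset V} (hC : C.IsLongest) (hH : C.IsComponent H) (hD : D ⊆ H)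
    (hu : u ∈ C.attach D) : 2 ≤ C.gap (C.attach D) u := by
  obtain ⟨p, rfl⟩ := exists_apply_eq_of_mem_attach hu
  have hpos := (gap_spec (p := p) (U := (C.attach D : Set V)) hu).1
  by_cases hlt : C.gap (C.attach D) (C p) < C.len
  · have := hH.two_le_gap hC (attach_mono hD hu) (attach_mono hD (apply_gap_mem_attach hu))
      (by omega) (by omega)
    omega
  · have := C.three_le
    omega

theorem add_two_le_gap_attach (hC : C.IsLongest) (hH : C.IsComponent H)
    (hN : 2 ≤ (C.attach H).card)
    (hlobe : ∀ D v, ¬ IsProperLobe G H D v) (h3 : 3 ≤ H.card) (hu : u ∈ C.attach H) (hx : x ∈ H)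
    (hy : y ∈ H) (hxy : x ≠ y) (hux : G.Adj u x) (huy : G.Adj (C.next (C.attach H) u) y)
    (hk : ∀ v ∈ H, v ≠ x → v ≠ y → k ≤ (H.filter (G.Adj v)).card) :
    k + 2 ≤ C.gap (C.attach H) u := by
  obtain ⟨n, hkn, hn⟩ := hH.exists_long_path hlobe h3 hx hy hxy hk
  have hlt := gap_attach_lt_len hN hu
  obtain ⟨p, rfl⟩ := exists_apply_eq_of_mem_attach hu
  rw [next_apply] at huy
  have := (gap_spec (p := p) (U := (C.attach H : Set V)) hu).1
  have := hC.add_two_le_gap hn hH.disjoint (by omega) (by omega) hux huy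
  omega

theorem sum_gap_bridging_le (hC : C.IsLongest) (hH : C.IsComponent H) :
    ∑ u ∈ C.bridging H, C.gap (C.attach H) u + 2 * (C.attach H).card ≤
      C.len + 2 * (C.bridging H).card := by
  have hsum := sum_gap_le_len (C := C) fun u (hu : u ∈ C.attach H) =>
    exists_apply_eq_of_mem_attach hu
  have hrest := Finset.card_nsmul_le_sum (C.attach H \ C.bridging H)
    (fun u => C.gap (C.attach H) u) 2
    fun u hu => hH.two_le_gap_attach hC subset_rfl (Finset.mem_sdiff.1 hu).1
  have hsplit := Finset.sum_sdiff (f := fun u => C.gap (C.attach H) u)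
    (bridging_subset_attach (C := C) (H := H))
  have hcard := Finset.card_sdiff_add_card_eq_card (bridging_subset_attach (C := C) (H := H))
  rw [smul_eq_mul] at hrest
  omega

end IsComponent

/-- The size of the private neighbourhood containing `u`, and `0` if there is none. -/
def privWeight (C : CyclicWalk G) (H : Finset V) (u : V) : ℕ :=
  ∑ x ∈ H with u ∈ C.priv H x, (C.priv H x).card

theorem privWeight_le (hx : x ∈ H) (hux : G.Adj u x) :
    C.privWeight H u ≤ (C.priv H x).card := by
  rw [privWeight, ← Finset.sum_singleton (fun x => (C.priv H x).card) x]
  refine Finset.sum_le_sum_of_subset fun y hy => Finset.mem_singleton.2 ?_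
  exact eq_of_mem_priv (Finset.mem_filter.1 hy).2 hx hux

theorem sum_card_priv_le_sum_privWeight {B : Finset V} (t : V → V)
    (hB : ∀ x, (C.priv H x).Nonempty → ∃ u ∈ B, t u ∈ C.priv H x) :
    ∑ x ∈ H, (C.priv H x).card ≤ ∑ u ∈ B, C.privWeight H (t u) := by
  simp only [privWeight, Finset.sum_filter]
  rw [Finset.sum_comm]
  refine Finset.sum_le_sum fun x _ => ?_
  rcases (C.priv H x).eq_empty_or_nonempty with h0 | h0
  · simp [h0]
  · obtain ⟨u, hu, hux⟩ := hB x h0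
    refine le_of_eq_of_le (by rw [if_pos hux]) (Finset.single_le_sum
      (f := fun u => if t u ∈ C.priv H x then (C.priv H x).card else 0)
      (fun _ _ => Nat.zero_le _) hu)

namespace IsComponent

variable [Fintype V]

theorem minDegree_add_sum_card_priv_le (hH : C.IsComponent H) (hv : v ∈ H) :
    G.minDegree + ∑ x ∈ H, (C.priv H x).card ≤
      (H.filter (G.Adj v)).card + (C.attach H).card + (C.priv H v).card := by
  have hdeg := hH.minDegree_le hv
  have hsplit := Finset.add_sum_erase H (fun x => (C.priv H x).card) hv
  have hdisj : Disjoint (C.attach {v}) ((H.erase v).biUnion (C.priv H)) := by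
    refine Finset.disjoint_left.2 fun u hu hu' => ?_
    obtain ⟨x, hx, hux⟩ := Finset.mem_biUnion.1 hu'
    obtain ⟨-, w, hw, huw⟩ := mem_attach.1 hu
    obtain rfl := Finset.mem_singleton.1 hw
    exact Finset.ne_of_mem_erase hx (eq_of_mem_priv hux hv huw)
  have hsub : C.attach {v} ∪ (H.erase v).biUnion (C.priv H) ⊆ C.attach H :=
    Finset.union_subset (attach_mono (Finset.singleton_subset_iff.2 hv))
      (Finset.biUnion_subset.2 fun _ _ => priv_subset_attach)
  have := Finset.card_le_card hsub
  rw [Finset.card_union_of_disjoint hdisj, Finset.card_biUnion (pairwiseDisjoint_priv _)] at this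
  omega

theorem card_attach_lt_indepNumber (hC : C.IsLongest) (hH : C.IsComponent H) :
    (C.attach H).card < indepNumber G := by
  obtain ⟨z, hz⟩ := hH.nonempty
  simpa using hH.card_attach_add_card_le_indepNumber hC (I := {z}) (by simpa using hz) (by simp)

theorem isClique_of_indepNumber_le (hC : C.IsLongest) (hH : C.IsComponent H)
    (hα : indepNumber G ≤ (C.attach H).card + 1) : G.IsClique (H : Set V) := by
  intro u hu v hv huv
  by_contra hadj
  have := hH.card_attach_add_card_le_indepNumber hC (I := {u, v})
    (Finset.insert_subset hu (Finset.singleton_subset_iff.2 hv)) (by simp [hadj, G.adj_comm v u])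
  rw [Finset.card_pair huv] at this
  omega

theorem sum_card_priv_add_four_le (hH : C.IsComponent H) (h2 : 2 ≤ H.card)
    (hN : (C.attach H).card + 1 ≤ G.minDegree) (hclique : G.IsClique (H : Set V)) :
    ∑ x ∈ H, (C.priv H x).card + 4 ≤ 2 * H.card := by
  obtain ⟨z, hz⟩ := hH.nonempty
  obtain ⟨w, hw, hwz⟩ := Finset.exists_mem_ne h2 z
  have hz' := hH.minDegree_add_sum_card_priv_le hz
  have hw' := hH.minDegree_add_sum_card_priv_le hw
  rw [card_filter_adj_of_isClique hclique ‹_›] at hz' hw'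
  have hpair := Finset.sum_le_sum_of_subset (f := fun x => (C.priv H x).card)
    (Finset.insert_subset hz (Finset.singleton_subset_iff.2 hw))
  rw [Finset.sum_pair hwz.symm] at hpair
  omega

theorem four_mul_minDegree_le_of_isClique (hC : C.IsLongest) (hG : NoSmallCut G 4)
    (hα : indepNumber G ≤ G.minDegree) (hH : C.IsComponent H)
    (hlobe : ∀ D v, ¬ IsProperLobe G H D v) (h3 : 3 ≤ H.card)
    (hδ : G.minDegree = (C.attach H).card + 1) : 4 * G.minDegree ≤ C.len + 8 := by
  have hN := hH.le_card_attach hC hG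
  have hclique := hH.isClique_of_indepNumber_le hC (hα.trans_eq hδ)
  have hgap : (H.card + 1) * (C.bridging H).card ≤ ∑ u ∈ C.bridging H, C.gap (C.attach H) u := by
    rw [mul_comm, ← smul_eq_mul]
    refine Finset.card_nsmul_le_sum _ _ _ fun u hu => ?_
    obtain ⟨huN, x, hx, y, hy, hxy, hux, huy⟩ := mem_bridging.1 hu
    have := hH.add_two_le_gap_attach hC (by omega) hlobe h3 huN hx hy hxy hux huy
      fun v hv _ _ => (card_filter_adj_of_isClique hclique hv).ge
    omega
  have hsum := hH.sum_gap_bridging_le hC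
  have hcard := card_attach_le_card_bridging_add (C := C) (H := H)
  have hpriv := hH.sum_card_priv_add_four_le (by omega) hδ.ge hclique
  rcases h3.eq_or_lt with hH3 | hH4
  · rw [← hH3] at hgap hpriv
    omega
  · have := hH.le_card_bridging hC (by omega) hG hH4
    nlinarith

theorem sum_gap_bridging_ge {d : ℕ} (hC : C.IsLongest) (hG : NoSmallCut G 2)
    (hH : C.IsComponent H) (hlobe : ∀ D v, ¬ IsProperLobe G H D v) (h3 : 3 ≤ H.card)
    (hd : (C.attach H).card + d ≤ G.minDegree) :
    (d + 2) * (C.bridging H).card + 2 * ∑ x ∈ H, (C.priv H x).card ≤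
      ∑ u ∈ C.bridging H, C.gap (C.attach H) u := by
  have hgap : ∀ u ∈ C.bridging H, (d + 2) + (C.privWeight H u +
      C.privWeight H (C.next (C.attach H) u)) ≤ C.gap (C.attach H) u := by
    intro u hu
    obtain ⟨huN, x, hx, y, hy, hxy, hux, huy⟩ := mem_bridging.1 hu
    have := privWeight_le (C := C) hx hux
    have := privWeight_le (C := C) hy huy
    have := hH.add_two_le_gap_attach hC (hH.le_card_attach hC hG) hlobe h3 huN hx hy hxy hux huy
      (k := d + (C.priv H x).card + (C.priv H y).card) fun v hv hvx hvy => by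
        have hdeg := hH.minDegree_add_sum_card_priv_le hv
        have htriple := Finset.sum_le_sum_of_subset (f := fun x => (C.priv H x).card)
          (show {v, x, y} ⊆ H by simp [Finset.insert_subset_iff, hv, hx, hy])
        rw [Finset.sum_insert (by simp [hvx, hvy]), Finset.sum_pair hxy] at htriple
        omega
    omega
  have hsum : ∑ _u ∈ C.bridging H, (d + 2) + (∑ u ∈ C.bridging H, C.privWeight H u +
      ∑ u ∈ C.bridging H, C.privWeight H (C.next (C.attach H) u)) ≤
      ∑ u ∈ C.bridging H, C.gap (C.attach H) u := by
    rw [← Finset.sum_add_distrib, ← Finset.sum_add_distrib]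
    exact Finset.sum_le_sum hgap
  rw [Finset.sum_const, smul_eq_mul, mul_comm] at hsum
  have hleave := sum_card_priv_le_sum_privWeight (C := C) (H := H) (B := C.bridging H) id
    fun x => hH.exists_mem_bridging_mem_priv hC hG (by omega)
  have henter := sum_card_priv_le_sum_privWeight (C := C) (H := H) (B := C.bridging H)
    (C.next (C.attach H)) fun x => hH.exists_mem_bridging_next_mem_priv hC hG (by omega)
  simp only [id_eq] at hleave
  omega

theorem four_mul_minDegree_le_of_add_two_le (hC : C.IsLongest) (hG : NoSmallCut G 4)
    (hH : C.IsComponent H) (hlobe : ∀ D v, ¬ IsProperLobe G H D v) (h3 : 3 ≤ H.card)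
    (hδ : (C.attach H).card + 2 ≤ G.minDegree) : 4 * G.minDegree ≤ C.len + 8 := by
  obtain ⟨d, hd⟩ := Nat.exists_eq_add_of_le hδ
  have hgap := hH.sum_gap_bridging_ge (d := d + 2) hC (hG.mono (by omega)) hlobe h3 (by omega)
  have hsum := hH.sum_gap_bridging_le hC
  have hcard := card_attach_le_card_bridging_add (C := C) (H := H)
  rcases h3.eq_or_lt with hH3 | hH4
  · obtain ⟨z, hz⟩ := hH.nonempty
    have hdeg := hH.minDegree_add_sum_card_priv_le hz
    have := Finset.card_lt_card (Finset.filter_ssubset.2 ⟨z, hz, G.irrefl (v := z)⟩)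
    have := Finset.single_le_sum (f := fun x => (C.priv H x).card) (fun _ _ => Nat.zero_le _) hz
    obtain rfl : d = 0 := by omega
    omega
  · have := hH.le_card_bridging hC (by omega) hG hH4
    nlinarith

omit [DecidableEq V] in
theorem four_mul_minDegree_le_of_not_isProperLobe (hC : C.IsLongest) (hG : NoSmallCut G 4)
    (hα : indepNumber G ≤ G.minDegree) (hH : C.IsComponent H)
    (hlobe : ∀ D v, ¬ IsProperLobe G H D v) (h3 : 3 ≤ H.card) :
    4 * G.minDegree ≤ C.len + 8 := by
  classical
  have hN := (hH.card_attach_lt_indepNumber hC).trans_le hα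
  rcases Nat.lt_or_ge ((C.attach H).card + 1) G.minDegree with hlt | hge
  · exact hH.four_mul_minDegree_le_of_add_two_le hC hG hlobe h3 hlt
  · exact hH.four_mul_minDegree_le_of_isClique hC hG hα hlobe h3 (by omega)

end IsComponent

end CyclicWalk

end TwoConnectedComponent

section Lobes

variable {G : SimpleGraph V}

namespace IsProperLobe

variable {W D : Finset V} {v : V}

theorem exists_minimal (h : IsProperLobe G W D v) :
    ∃ E ⊆ D, ∃ w, IsProperLobe G W E w ∧ ∀ F ⊂ E, ∀ u, ¬ IsLobe G W F u := by
  obtain ⟨E, ⟨hED, w, hE⟩, hmin⟩ := exists_minimal_of_wellFoundedLT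
    (fun E => E ⊆ D ∧ ∃ w, IsProperLobe G W E w) ⟨D, subset_rfl, v, h⟩
  refine ⟨E, hED, w, hE, fun F hF u hu => hF.not_subset (hmin ⟨hF.subset.trans hED, u, hu, ?_⟩
    hF.subset)⟩
  obtain ⟨s, hsE, hsF⟩ := Finset.exists_of_ssubset hF
  by_cases hsu : s = u
  · obtain ⟨z, hz, hzE, -⟩ := hE.exists_notMem
    exact ⟨z, hz, fun h => hzE (hF.subset h), fun h => hzE (h.trans hsu.symm ▸ hsE)⟩
  · exact ⟨s, hE.subset hsE, hsF, hsu⟩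

theorem sdiff_erase [DecidableEq V] (h : IsProperLobe G W D v) :
    IsProperLobe G W ((W \ D).erase v) v where
  subset := (Finset.erase_subset _ _).trans Finset.sdiff_subset
  nonempty := by
    obtain ⟨w, hw, hwD, hwv⟩ := h.exists_notMem
    exact ⟨w, Finset.mem_erase.2 ⟨hwv, Finset.mem_sdiff.2 ⟨hw, hwD⟩⟩⟩
  notMem := Finset.notMem_erase _ _
  eq_of_adj a ha b hb hbK hab := by
    rw [Finset.mem_erase, Finset.mem_sdiff] at ha
    by_contra hbv
    have hbD : b ∈ D := by_contra fun hbD =>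
      hbK (Finset.mem_erase.2 ⟨hbv, Finset.mem_sdiff.2 ⟨hb, hbD⟩⟩)
    exact ha.1 (h.eq_of_adj b hbD a ha.2.1 ha.2.2 hab.symm)
  exists_notMem := by
    obtain ⟨w, hw⟩ := h.nonempty
    exact ⟨w, h.subset hw, by simp [hw], ne_of_mem_of_not_mem hw h.notMem⟩

end IsProperLobe

namespace CyclicWalk

variable {C : CyclicWalk G} {H D E : Finset V} {v w s t : V}

namespace IsComponent

theorem mem_and_exists_adj (hH : C.IsComponent H) (h : IsProperLobe G H D v) :
    v ∈ H ∧ ∃ a ∈ D, G.Adj a v := by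
  obtain ⟨z, hz, hzD, -⟩ := h.exists_notMem
  obtain ⟨a, ha, b, hb, hbD, hab⟩ := hH.exists_adj D h.subset h.nonempty
    (ne_of_mem_of_not_mem' hz hzD).symm
  obtain rfl := h.eq_of_adj a ha b hb hbD hab
  exact ⟨hb, a, ha, hab⟩

variable [DecidableEq V]

theorem exists_hasPathIn_sdiff_sdiff (hH : C.IsComponent H) (hD : IsProperLobe G H D v)
    (hE : IsProperLobe G H E w) (hED : E ⊆ (H \ D).erase v) :
    ∃ n, HasPathIn G ((H \ D) \ E : Finset V) v w n := by
  obtain ⟨hv, -⟩ := hH.mem_and_exists_adj hD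
  obtain ⟨hw, a, ha, haw⟩ := hH.mem_and_exists_adj hE
  have hvE : v ∉ E := fun h => Finset.notMem_erase _ _ (hED h)
  have haK := hED ha
  rw [Finset.mem_erase, Finset.mem_sdiff] at haK
  have hwD : w ∉ D := fun h => haK.1 (hD.eq_of_adj w h a haK.2.1 haK.2.2 haw.symm)
  refine _root_.exists_hasPathIn (by simp [hv, hD.notMem, hvE]) fun F hF hvF hwF => ?_
  have hwFD : w ∉ F ∪ D := by simp [hwF, hwD]
  have hFM : ∀ z ∈ F, z ∈ H ∧ z ∉ E := fun z hz => by
    have := hF hz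
    rw [Finset.mem_sdiff, Finset.mem_sdiff] at this
    exact ⟨this.1.1, this.2⟩
  obtain ⟨a, ha, b, hb, hbF, hab⟩ := hH.exists_adj (F ∪ D)
    (Finset.union_subset (fun z hz => (hFM z hz).1) hD.subset) ⟨v, Finset.mem_union_left _ hvF⟩
    (ne_of_mem_of_not_mem' hw hwFD).symm
  rw [Finset.mem_union, not_or] at hbF
  rcases Finset.mem_union.1 ha with haF | haD
  · refine ⟨a, haF, b, ?_, hbF.1, hab⟩
    rw [Finset.mem_sdiff, Finset.mem_sdiff]
    refine ⟨⟨hb, hbF.2⟩, fun hbE => hwF ?_⟩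
    exact hE.eq_of_adj b hbE a (hFM a haF).1 (hFM a haF).2 hab.symm ▸ haF
  · exact (hbF.1 (hD.eq_of_adj a haD b hb hbF.2 hab ▸ hvF)).elim

variable [Fintype V] [DecidableRel G.Adj]

theorem exists_long_path_insert (hH : C.IsComponent H) (hD : IsProperLobe G H D v)
    (hmin : ∀ F ⊂ D, ∀ u, ¬ IsLobe G H F u) (hs : s ∈ D) :
    ∃ n, G.minDegree ≤ n + (C.attach D).card ∧ HasPathIn G ↑(insert v D) s v n := by
  have hdeg : ∀ z ∈ D,
      G.minDegree - (C.attach D).card ≤ ((insert v D).filter (G.Adj z)).card := fun z hz => by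
    have := hH.minDegree_le (hD.subset hz)
    have := Finset.card_le_card (attach_mono (C := C) (Finset.singleton_subset_iff.2 hz))
    have := Finset.card_le_card (s := H.filter (G.Adj z)) (t := (insert v D).filter (G.Adj z))
      fun b hb => by
        rw [Finset.mem_filter] at hb
        exact Finset.mem_filter.2 ⟨hD.mem_insert_of_adj hz hb.1 hb.2, hb.2⟩
    omega
  have hplus := hD.twoConnectedPlus hmin (hH.mem_and_exists_adj hD).2 hs
  obtain ⟨n, hn, hpath⟩ := hplus.exists_long_path
    (fun z hz _ hzv => hdeg z (Finset.mem_of_mem_insert_of_ne hz hzv)) (by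
      by_contra! hsmall
      have := hdeg s hs
      have := Finset.card_lt_card (Finset.filter_ssubset.2 ⟨s, hplus.left_mem, G.irrefl (v := s)⟩)
      omega)
  exact ⟨n, by omega, hpath⟩

theorem exists_long_path_of_isProperLobe (hH : C.IsComponent H) (hD : IsProperLobe G H D v)
    (hDmin : ∀ F ⊂ D, ∀ u, ¬ IsLobe G H F u) (hE : IsProperLobe G H E w)
    (hEmin : ∀ F ⊂ E, ∀ u, ¬ IsLobe G H F u) (hED : E ⊆ (H \ D).erase v) (hs : s ∈ D)
    (ht : t ∈ E) :
    ∃ n, 2 * G.minDegree ≤ n + (C.attach D).card + (C.attach E).card ∧ HasPathIn G H s t n := by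
  obtain ⟨l, hl, hpathD⟩ := hH.exists_long_path_insert hD hDmin hs
  obtain ⟨m, hpath⟩ := hH.exists_hasPathIn_sdiff_sdiff hD hE hED
  obtain ⟨n, hn, hpathE⟩ := hH.exists_long_path_insert hE hEmin ht
  have hv := (hH.mem_and_exists_adj hD).1
  have hw := (hH.mem_and_exists_adj hE).1
  have hvE : v ∉ E := fun h => Finset.notMem_erase _ _ (hED h)
  have hdisj : ∀ z ∈ D, z ∉ E := fun z hzD hzE =>
    (Finset.mem_sdiff.1 (Finset.mem_of_mem_erase (hED hzE))).2 hzD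
  refine ⟨l + m + n, by omega, ((hpathD.glue hpath ?_).glue hpathE.reverse ?_).mono ?_⟩
  · intro z
    simp only [Set.mem_inter_iff, Finset.mem_coe, Finset.mem_insert, Finset.mem_sdiff,
      Set.mem_singleton_iff]
    tauto
  · intro z
    simp only [Set.mem_inter_iff, Set.mem_union, Finset.mem_coe, Finset.mem_insert,
      Finset.mem_sdiff, Set.mem_singleton_iff]
    grind
  · intro z
    have := @hD.subset z
    have := @hE.subset z
    simp only [Set.mem_union, Finset.mem_coe, Finset.mem_insert, Finset.mem_sdiff]
    grind

end IsComponent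

variable [DecidableEq V] [DecidableRel G.Adj]

theorem attach_union : C.attach (D ∪ E) = C.attach D ∪ C.attach E := by
  ext u
  simp only [mem_attach, Finset.mem_union, or_and_right, exists_or, and_or_left]

/-- The attachments `u` of `D ∪ E` such that one of `u` and the next attachment has a neighbour in
`D` and the other one has a neighbour in `E`. -/
noncomputable def mixed (C : CyclicWalk G) (D E : Finset V) : Finset V :=
  {u ∈ C.attach (D ∪ E) |
    (u ∈ C.attach D ∧ C.next (C.attach (D ∪ E)) u ∈ C.attach E) ∨
    (u ∈ C.attach E ∧ C.next (C.attach (D ∪ E)) u ∈ C.attach D)}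

variable {u : V}

theorem mem_mixed : u ∈ C.mixed D E ↔ u ∈ C.attach (D ∪ E) ∧
    ((u ∈ C.attach D ∧ C.next (C.attach (D ∪ E)) u ∈ C.attach E) ∨
    (u ∈ C.attach E ∧ C.next (C.attach (D ∪ E)) u ∈ C.attach D)) :=
  Finset.mem_filter

theorem mixed_subset_attach : C.mixed D E ⊆ C.attach (D ∪ E) := Finset.filter_subset _ _

theorem mixed_comm : C.mixed D E = C.mixed E D := by
  simp only [mixed, Finset.union_comm E D, or_comm]

theorem inter_subset_mixed : C.attach D ∩ C.attach E ⊆ C.mixed D E := by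
  intro u hu
  rw [Finset.mem_inter] at hu
  have huDE : u ∈ C.attach (D ∪ E) := attach_mono Finset.subset_union_left hu.1
  have hnext := next_mem_attach huDE
  rw [attach_union, Finset.mem_union] at hnext
  refine mem_mixed.2 ⟨huDE, ?_⟩
  rw [attach_union]
  tauto

theorem exists_mem_mixed_notMem (hD : (C.attach D).Nonempty)
    (hED : ¬ C.attach E ⊆ C.attach D) : ∃ u ∈ C.mixed D E, u ∉ C.attach D := by
  obtain ⟨y, hyE, hyD⟩ := Finset.not_subset.1 hED
  obtain ⟨x, hx⟩ := hD
  obtain ⟨p, rfl⟩ := exists_apply_eq_of_mem_attach hyE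
  obtain ⟨q, rfl⟩ := exists_apply_eq_of_mem_attach hx
  obtain ⟨u, ⟨hu, huD⟩, hnext⟩ := exists_next_mem (C := C) (U := (C.attach (D ∪ E) : Set V))
    (Z := C.attach D) ⟨attach_mono Finset.subset_union_right hyE, hyD⟩ hx
    (Finset.coe_subset.2 (attach_mono Finset.subset_union_left))
  have huE : u ∈ C.attach E :=
    (Finset.mem_union.1 (attach_union (C := C) ▸ hu)).resolve_left huD
  exact ⟨u, mem_mixed.2 ⟨hu, .inr ⟨huE, hnext⟩⟩, huD⟩

theorem two_le_card_mixed (hD : 2 ≤ (C.attach D).card) (hE : 2 ≤ (C.attach E).card) :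
    2 ≤ (C.mixed D E).card := by
  have hinter := Finset.card_le_card (inter_subset_mixed (C := C) (D := D) (E := E))
  by_cases hED : C.attach E ⊆ C.attach D
  · rw [Finset.inter_eq_right.2 hED] at hinter
    omega
  by_cases hDE : C.attach D ⊆ C.attach E
  · rw [Finset.inter_eq_left.2 hDE] at hinter
    omega
  obtain ⟨u, hu, huD⟩ := exists_mem_mixed_notMem (Finset.card_pos.1 (by omega)) hED
  obtain ⟨v, hv, hvE⟩ := exists_mem_mixed_notMem (Finset.card_pos.1 (by omega)) hDE
  rw [mixed_comm] at hv
  refine Finset.one_lt_card.2 ⟨u, hu, v, hv, ?_⟩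
  rintro rfl
  have := mixed_subset_attach hu
  rw [attach_union, Finset.mem_union] at this
  exact this.elim huD hvE

namespace IsComponent

variable {d : ℕ}

theorem add_two_le_gap_mixed (hC : C.IsLongest) (hH : C.IsComponent H)
    (h2 : 2 ≤ (C.attach (D ∪ E)).card)
    (hpath : ∀ s ∈ D, ∀ t ∈ E, ∃ n, d ≤ n ∧ HasPathIn G H s t n) (hu : u ∈ C.mixed D E) :
    d + 2 ≤ C.gap (C.attach (D ∪ E)) u := by
  obtain ⟨huDE, hmixed⟩ := mem_mixed.1 hu
  have hlt := gap_attach_lt_len h2 huDE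
  obtain ⟨p, rfl⟩ := exists_apply_eq_of_mem_attach huDE
  have hpos := (gap_spec (p := p) (U := (C.attach (D ∪ E) : Set V)) huDE).1
  rw [next_apply] at hmixed
  simp only [apply_mem_attach] at hmixed
  rcases hmixed with ⟨⟨s, hs, hps⟩, t, ht, hqt⟩ | ⟨⟨t, ht, hpt⟩, s, hs, hqs⟩
  · obtain ⟨n, hdn, hn⟩ := hpath s hs t ht
    have := hC.add_two_le_gap hn hH.disjoint (by omega) (by omega) hps hqt
    omega
  · obtain ⟨n, hdn, hn⟩ := hpath s hs t ht
    have := hC.add_two_le_gap hn.reverse hH.disjoint (by omega) (by omega) hpt hqs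
    omega

theorem mul_card_mixed_add_le_len (hC : C.IsLongest) (hH : C.IsComponent H) (hD : D ⊆ H)
    (hE : E ⊆ H) (h2 : 2 ≤ (C.attach (D ∪ E)).card)
    (hpath : ∀ s ∈ D, ∀ t ∈ E, ∃ n, d ≤ n ∧ HasPathIn G H s t n) :
    (C.mixed D E).card * d + 2 * (C.attach (D ∪ E)).card ≤ C.len := by
  have hsum := sum_gap_le_len (C := C) fun u (hu : u ∈ C.attach (D ∪ E)) =>
    exists_apply_eq_of_mem_attach hu
  have hrest := Finset.card_nsmul_le_sum (C.attach (D ∪ E) \ C.mixed D E)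
    (fun u => C.gap (C.attach (D ∪ E)) u) 2
    fun u hu => hH.two_le_gap_attach hC (Finset.union_subset hD hE) (Finset.mem_sdiff.1 hu).1
  have hmixed := Finset.card_nsmul_le_sum (C.mixed D E)
    (fun u => C.gap (C.attach (D ∪ E)) u) (d + 2) fun u => hH.add_two_le_gap_mixed hC h2 hpath
  have hsplit := Finset.sum_sdiff (f := fun u => C.gap (C.attach (D ∪ E)) u)
    (mixed_subset_attach (C := C) (D := D) (E := E))
  have hcard := Finset.card_sdiff_add_card_eq_card (mixed_subset_attach (C := C) (D := D) (E := E))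
  rw [smul_eq_mul] at hrest hmixed
  rw [mul_add] at hmixed
  omega

theorem two_mul_add_card_attach_le (hC : C.IsLongest) (hH : C.IsComponent H) (hD : D ⊆ H)
    (hE : E ⊆ H) (h2D : 2 ≤ (C.attach D).card) (h2E : 2 ≤ (C.attach E).card) (h2d : 2 ≤ d)
    (hpath : ∀ s ∈ D, ∀ t ∈ E, ∃ n, d ≤ n ∧ HasPathIn G H s t n) :
    2 * (d + (C.attach D).card + (C.attach E).card) ≤ C.len + 4 := by
  have hunion := Finset.card_union_add_card_inter (C.attach D) (C.attach E)
  rw [← attach_union] at hunion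
  have h2 := h2D.trans (Finset.card_le_card (attach_mono (Finset.subset_union_left (s₂ := E))))
  have hlen := hH.mul_card_mixed_add_le_len hC hD hE h2 hpath
  have hinter := Finset.card_le_card (inter_subset_mixed (C := C) (D := D) (E := E))
  have hmixed := two_le_card_mixed h2D h2E
  nlinarith

theorem three_le_card_attach (hC : C.IsLongest) (hG : NoSmallCut G 4) (hH : C.IsComponent H)
    (hD : IsProperLobe G H D v) : 3 ≤ (C.attach D).card := by
  have hv := (hH.mem_and_exists_adj hD).1
  have := hG.le_card (T := insert v (C.attach D)) hD.nonempty ?_ (fun a ha b hb hab => ?_) ?_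
  · have := Finset.card_insert_le v (C.attach D)
    omega
  · refine Finset.disjoint_insert_right.2 ⟨hD.notMem, Finset.disjoint_left.2 fun a ha ha' => ?_⟩
    obtain ⟨i, hi⟩ := exists_apply_eq_of_mem_attach ha'
    exact hH.apply_ne (hD.subset ha) i hi
  · exact Finset.mem_insert.2 ((hH.mem_or_mem_range a (hD.subset ha) b hab).imp
      (fun hbH => hD.eq_of_adj a ha b hbH hb hab) fun hbC => mem_attach.2 ⟨hbC, a, ha, hab.symm⟩)
  · obtain ⟨i, hi⟩ := hH.exists_notMem_attach hC
    refine ⟨C i, fun h => hH.apply_ne (hD.subset h) i rfl, fun h => ?_⟩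
    exact (Finset.mem_insert.1 h).elim (hH.apply_ne hv i) fun h => hi (attach_mono hD.subset h)

variable [Fintype V]

omit [DecidableEq V] in
theorem four_mul_minDegree_le_of_isProperLobe (hC : C.IsLongest) (hG : NoSmallCut G 4)
    (hα : indepNumber G ≤ G.minDegree) (hH : C.IsComponent H) (hD : IsProperLobe G H D v) :
    4 * G.minDegree ≤ C.len + 4 := by
  classical
  obtain ⟨D₁, -, v₁, hD₁, hmin₁⟩ := hD.exists_minimal
  obtain ⟨D₂, hD₂₁, v₂, hD₂, hmin₂⟩ := hD₁.sdiff_erase.exists_minimal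
  have hN : (C.attach H).card + 2 ≤ G.minDegree := by
    by_contra! hlt
    have hclique := hH.isClique_of_indepNumber_le hC (hα.trans (by omega))
    obtain ⟨a, ha⟩ := hD₁.nonempty
    obtain ⟨b, hb⟩ := hD₂.nonempty
    have hbK := hD₂₁ hb
    rw [Finset.mem_erase, Finset.mem_sdiff] at hbK
    exact hbK.1 (hD₁.eq_of_adj a ha b hbK.2.1 hbK.2.2
      (hclique (hD₁.subset ha) hbK.2.1 (ne_of_mem_of_not_mem ha hbK.2.2)))
  have h₁ := hH.three_le_card_attach hC hG hD₁
  have h₂ := hH.three_le_card_attach hC hG hD₂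
  have := Finset.card_le_card (attach_mono (C := C) hD₁.subset)
  have := Finset.card_le_card (attach_mono (C := C) hD₂.subset)
  have := hH.two_mul_add_card_attach_le hC hD₁.subset hD₂.subset (by omega) (by omega)
    (d := 2 * G.minDegree - (C.attach D₁).card - (C.attach D₂).card) (by omega) fun s hs t ht => by
      obtain ⟨n, hn, hpath⟩ :=
        hH.exists_long_path_of_isProperLobe hD₁ hmin₁ hD₂ hmin₂ hD₂₁ hs ht
      exact ⟨n, by omega, hpath⟩
  omega

end IsComponent

end CyclicWalk

end Lobes

section TwinPairs

variable {G : SimpleGraph V}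

namespace CyclicWalk

variable {C : CyclicWalk G} {H K : Finset V} {p q i j ε : ℤ} {u v : V}

/-- A two-vertex component of `G - C` both of whose vertices have the same neighbours on `C`. -/
structure IsTwinPair (C : CyclicWalk G) (H : Finset V) : Prop extends C.IsComponent H where
  card_eq_two : H.card = 2
  adj_of_adj : ∀ v ∈ H, ∀ w ∈ H, ∀ i, G.Adj (C i) v → G.Adj (C i) w

/-- The vertices of the cycle that are reached from no vertex of `U` by `i` or by `j` steps. -/
noncomputable def rest [DecidableEq V] (C : CyclicWalk G) (U : Finset V) (i j : ℤ) : Finset V :=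
  C.verts \ (C.shift i U ∪ C.shift j U)

section Attach

variable [DecidableEq V] [DecidableRel G.Adj]

theorem IsComponent.isTwinPair_of_card_le [Fintype V] (hH : C.IsComponent H)
    (hN : (C.attach H).card < G.minDegree) (hcard : H.card ≤ 2) :
    C.IsTwinPair H ∧ G.minDegree = (C.attach H).card + 1 := by
  have hdeg : ∀ v ∈ H, G.minDegree ≤ H.card - 1 + (C.attach {v}).card := fun v hv => by
    have := Finset.card_lt_card (Finset.filter_ssubset.2 ⟨v, hv, G.irrefl (v := v)⟩)
    have := hH.minDegree_le hv
    omega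
  have hsub : ∀ v ∈ H, C.attach {v} ⊆ C.attach H := fun v hv =>
    attach_mono (Finset.singleton_subset_iff.2 hv)
  obtain ⟨z, hz⟩ := hH.nonempty
  have hdz := hdeg z hz
  have hcz := Finset.card_le_card (hsub z hz)
  refine ⟨⟨hH, by omega, fun v hv w hw i hi => ?_⟩, by omega⟩
  have heq : C.attach {w} = C.attach H :=
    Finset.eq_of_subset_of_card_le (hsub w hw) (by have := hdeg w hw; omega)
  have hmem : C i ∈ C.attach {w} := heq ▸ apply_mem_attach.2 ⟨v, hv, hi⟩
  simpa [apply_mem_attach] using hmem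

theorem IsComponent.isTwinPair_or_four_mul_minDegree_le [Fintype V] (hC : C.IsLongest)
    (hG : NoSmallCut G 4) (hα : indepNumber G ≤ G.minDegree) (hH : C.IsComponent H) :
    C.IsTwinPair H ∧ G.minDegree = (C.attach H).card + 1 ∨ 4 * G.minDegree ≤ C.len + 8 := by
  by_cases hlobe : ∃ D v, IsProperLobe G H D v
  · obtain ⟨D, v, hD⟩ := hlobe
    exact Or.inr ((hH.four_mul_minDegree_le_of_isProperLobe hC hG hα hD).trans (by omega))
  · push Not at hlobe
    rcases Nat.lt_or_ge 2 H.card with h3 | h2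
    · exact Or.inr (hH.four_mul_minDegree_le_of_not_isProperLobe hC hG hα hlobe h3)
    · exact Or.inl
        (hH.isTwinPair_of_card_le ((hH.card_attach_lt_indepNumber hC).trans_le hα) h2)

end Attach

namespace IsTwinPair

theorem adj_of_ne (hH : C.IsTwinPair H) (hu : u ∈ H) (hv : v ∈ H) (huv : u ≠ v) : G.Adj u v := by
  classical
  have hpair : ({u, v} : Finset V) = H := Finset.eq_of_subset_of_card_le
    (Finset.insert_subset hu (Finset.singleton_subset_iff.2 hv))
    (by rw [hH.card_eq_two, Finset.card_pair huv])
  obtain ⟨a, ha, b, hb, hba, hab⟩ := hH.exists_adj {u} (Finset.singleton_subset_iff.2 hu)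
    (Finset.singleton_nonempty u) (ne_of_mem_of_not_mem' hv (by simpa using huv.symm)).symm
  rw [← hpair, Finset.mem_insert, Finset.mem_singleton] at hb
  rw [Finset.mem_singleton] at ha hba
  rwa [ha, hb.resolve_left hba] at hab

theorem exists_hasPathIn_one (hH : C.IsTwinPair H) :
    ∃ s ∈ H, ∃ t ∈ H, HasPathIn G H s t 1 := by
  obtain ⟨s, hs, t, ht, hst⟩ := Finset.one_lt_card.1 (hH.card_eq_two.symm ▸ one_lt_two)
  exact ⟨s, hs, t, ht, ((HasPathIn.singleton t).cons (hH.adj_of_ne hs ht hst) hst).mono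
    (Set.insert_subset hs (Set.singleton_subset_iff.2 ht))⟩

theorem neg (hH : C.IsTwinPair H) : C.neg.IsTwinPair H := by
  have hrange : Set.range C.neg = Set.range C := (Equiv.neg ℤ).surjective.range_comp C
  exact ⟨⟨hH.nonempty, hrange ▸ hH.disjoint, hrange ▸ hH.mem_or_mem_range, hH.exists_adj⟩,
    hH.card_eq_two, fun v hv w hw i => hH.adj_of_adj v hv w hw (-i)⟩

variable [DecidableEq V] [DecidableRel G.Adj]

theorem adj_of_mem_attach (hH : C.IsTwinPair H) (hp : C p ∈ C.attach H) (hv : v ∈ H) :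
    G.Adj (C p) v := by
  obtain ⟨w, hw, hpw⟩ := apply_mem_attach.1 hp
  exact hH.adj_of_adj w hw v hv p hpw

theorem three_le_gap (hC : C.IsLongest) (hH : C.IsTwinPair H) (hp : C p ∈ C.attach H)
    (hq : C q ∈ C.attach H) (hpq : p < q) (hqp : q < p + C.len) : 3 ≤ q - p := by
  obtain ⟨s, hs, t, ht, hst⟩ := hH.exists_hasPathIn_one
  have := hC.add_two_le_gap hst hH.disjoint hpq hqp (hH.adj_of_mem_attach hp hs)
    (hH.adj_of_mem_attach hq ht)
  omega

theorem exists_apply_add_eq (hC : C.IsLongest) (hH : C.IsTwinPair H) (hp : C p ∈ C.attach H)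
    (hq : C q ∈ C.attach H) (hpq : C p ≠ C q) :
    ∃ k : ℕ, 3 ≤ k ∧ k + 3 ≤ C.len ∧ C (p + k) = C q := by
  obtain ⟨k, hk, hklen, hkq⟩ := exists_pos_apply_add_eq hpq
  rw [← hkq] at hq
  have h₁ := hH.three_le_gap hC hp hq (by omega) (by omega)
  have h₂ := hH.three_le_gap hC hq ((C.apply_add_len p).symm ▸ hp) (by omega) (by omega)
  exact ⟨k, by omega, by omega, hkq⟩

theorem not_adj_add (hC : C.IsLongest) (hH : C.IsTwinPair H) (hp : C p ∈ C.attach H)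
    (hq : C q ∈ C.attach H) (hpq : C p ≠ C q) (hj : 0 < j) (hj' : j ≤ 2) :
    ¬ G.Adj (C (p + 1)) (C (q + j)) := by
  intro hadj
  obtain ⟨k, hk, hklen, hkq⟩ := hH.exists_apply_add_eq hC hp hq hpq
  rw [← C.rot_apply j q, ← hkq, C.rot_apply] at hadj
  obtain ⟨s, hs, t, ht, hst⟩ := hH.exists_hasPathIn_one
  have := hC.add_three_le_of_chord hst hH.disjoint (lt_add_one p) (by omega)
    (lt_add_of_pos_right (p + k) hj) (by omega) (hH.adj_of_mem_attach hp hs)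
    (hH.adj_of_mem_attach (hkq ▸ hq) ht) hadj
  omega

theorem not_adj_add_mul (hC : C.IsLongest) (hH : C.IsTwinPair H) (hε : ε = 1 ∨ ε = -1)
    (hp : C p ∈ C.attach H) (hq : C q ∈ C.attach H) (hpq : C p ≠ C q) (hj : 0 < j) (hj' : j ≤ 2) :
    ¬ G.Adj (C (p + ε)) (C (q + j * ε)) := by
  obtain rfl | rfl := hε
  · simpa using hH.not_adj_add hC hp hq hpq hj hj'
  · have hneg : ∀ i, C i = C.neg (-i) := fun i => congrArg C (neg_neg i).symm
    rw [apply_mem_attach, hneg] at hp hq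
    rw [hneg, hneg q] at hpq
    rw [hneg, hneg (q + _), neg_add, neg_add, neg_neg, ← mul_neg, neg_neg, mul_one]
    exact hH.neg.not_adj_add hC.neg (apply_mem_attach.2 hp) (apply_mem_attach.2 hq) hpq hj hj'

theorem disjoint_shift_of_lt (hC : C.IsLongest) (hH : C.IsTwinPair H) (hij : i < j)
    (hji : j ≤ i + 2) : Disjoint (C.shift i (C.attach H)) (C.shift j (C.attach H)) := by
  have hN : ∀ u ∈ C.attach H, ∃ i, C i = u := fun _ => exists_apply_eq_of_mem_attach
  refine Finset.disjoint_left.2 fun v hv hv' => ?_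
  obtain ⟨p, hp, rfl⟩ := (mem_shift hN).1 hv
  obtain ⟨q, hq, hqp⟩ := (mem_shift hN).1 hv'
  have hpq : C p = C (q + (j - i)) := by
    rw [eq_comm, C.eq_iff]
    convert (C.eq_iff _ _).1 hqp using 1
    ring
  have := C.three_le
  have := hH.three_le_gap hC hq (hpq ▸ hp) (by omega) (by omega)
  omega

theorem disjoint_shift (hC : C.IsLongest) (hH : C.IsTwinPair H) (hne : i ≠ j)
    (hij : |i - j| ≤ 2) : Disjoint (C.shift i (C.attach H)) (C.shift j (C.attach H)) := by
  rw [abs_le] at hij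
  rcases hne.lt_or_gt with h | h
  · exact hH.disjoint_shift_of_lt hC h (by omega)
  · exact (hH.disjoint_shift_of_lt hC h (by omega)).symm

theorem card_rest_add (hC : C.IsLongest) (hH : C.IsTwinPair H) (hne : i ≠ j)
    (hij : |i - j| ≤ 2) :
    (C.rest (C.attach H) i j).card + 2 * (C.attach H).card = C.len := by
  have hN : ∀ u ∈ C.attach H, ∃ i, C i = u := fun _ => exists_apply_eq_of_mem_attach
  have hsub := Finset.union_subset (shift_subset_verts hN i) (shift_subset_verts hN j)
  have := Finset.card_sdiff_add_card_eq_card hsub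
  rw [Finset.card_union_of_disjoint (hH.disjoint_shift hC hne hij), card_shift hN,
    card_shift hN, card_verts] at this
  rw [rest]
  omega

theorem attach_subset_rest (hC : C.IsLongest) (hH : C.IsTwinPair H) (hi₀ : i ≠ 0)
    (hi : |i| ≤ 2) (hj₀ : j ≠ 0) (hj : |j| ≤ 2) :
    C.attach H ⊆ C.rest (C.attach H) i j := by
  have hN : ∀ u ∈ C.attach H, ∃ i, C i = u := fun _ => exists_apply_eq_of_mem_attach
  refine Finset.subset_sdiff.2 ⟨Finset.filter_subset _ _, ?_⟩
  nth_rw 1 [← shift_zero hN]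
  exact Finset.disjoint_union_right.2 ⟨hH.disjoint_shift hC hi₀.symm (by simpa using hi),
    hH.disjoint_shift hC hj₀.symm (by simpa using hj)⟩

theorem exists_apply_succ_mem_attach [Fintype V] (hC : C.IsLongest) (hH : C.IsTwinPair H)
    (hK : C.IsTwinPair K) (hHK : Disjoint H K) (hα : indepNumber G ≤ (C.attach H).card + 1) :
    ∃ p, C p ∈ C.attach H ∧ C (p + 1) ∈ C.attach K := by
  by_contra! hcon
  obtain ⟨x, hx⟩ := hH.nonempty
  obtain ⟨z, hz⟩ := hK.nonempty
  have hzH : z ∉ H := fun hzH => Finset.disjoint_left.1 hHK hzH hz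
  have hadj : ¬ G.Adj x z := fun h =>
    (hH.mem_or_mem_range x hx z h).elim hzH fun ⟨i, hi⟩ => hK.apply_ne hz i hi
  have hindep : (C.attach H).card + ({x, z} : Finset V).card ≤ indepNumber G := by
    refine hH.card_attach_add_card_le_indepNumber_of_disjoint hC ?_ (fun p hp h => ?_) ?_
    · simp only [Finset.coe_insert, Finset.coe_singleton, Set.disjoint_insert_left,
        Set.disjoint_singleton_left]
      exact ⟨fun ⟨i, hi⟩ => hH.apply_ne hx i hi, fun ⟨i, hi⟩ => hK.apply_ne hz i hi⟩
    · obtain ⟨v, hv, hpv⟩ := apply_mem_attach.1 h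
      obtain rfl | rfl : v = x ∨ v = z := by simpa using hv
      · exact hH.apply_succ_notMem_attach hC hp (apply_mem_attach.2 ⟨v, hx, hpv⟩)
      · exact hcon p hp (apply_mem_attach.2 ⟨v, hz, hpv⟩)
    · simp [hadj, G.adj_comm z x]
  rw [Finset.card_pair (ne_of_mem_of_not_mem hx hzH)] at hindep
  omega

theorem apply_add_eq_of_mem_attach (hC : C.IsLongest) (hH : C.IsTwinPair H)
    (hK : C.IsTwinPair K) (hHK : Disjoint H K) (hp : C p ∈ C.attach H)
    (hp' : C (p + 1) ∈ C.attach K) (hq : C q ∈ C.attach H) (hj : 0 < j) (hj' : j ≤ 3)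
    (hqj : C (q + j) ∈ C.attach K) : C (q + j) = C (p + 1) := by
  by_cases hpq : C p = C q
  · rw [← C.rot_apply j q, ← hpq, C.rot_apply] at hqj ⊢
    obtain rfl | hj₁ : j = 1 ∨ 1 < j := by omega
    · rfl
    · have := C.three_le
      have := hK.three_le_gap hC hp' hqj (by omega) (by omega)
      omega
  · obtain ⟨k, hk, hklen, hkq⟩ := hH.exists_apply_add_eq hC hp hq hpq
    rw [← C.rot_apply j q, ← hkq, C.rot_apply] at hqj
    have hlast : p + k + j ≠ p + C.len := fun h => by
      rw [h, C.apply_add_len] at hqj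
      exact hK.apply_succ_notMem_attach hC hqj hp'
    obtain ⟨s, hs, t, ht, hst⟩ := hH.exists_hasPathIn_one
    obtain ⟨s', hs', t', ht', hst'⟩ := hK.exists_hasPathIn_one
    have := hC.add_four_le_of_crossing hst hH.disjoint hst' hK.disjoint
      (Finset.disjoint_coe.2 hHK) (lt_add_one p) (by omega) (lt_add_of_pos_right (p + k) hj)
      (by omega) (hH.adj_of_mem_attach hp hs) (hH.adj_of_mem_attach (hkq ▸ hq) ht)
      (hK.adj_of_mem_attach hp' hs') (hK.adj_of_mem_attach hqj ht')
    omega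

theorem three_mul_card_attach_add_card_attach_le (hC : C.IsLongest) (hH : C.IsTwinPair H)
    (hK : C.IsTwinPair K) (hHK : Disjoint H K) (hp : C p ∈ C.attach H)
    (hp' : C (p + 1) ∈ C.attach K) :
    3 * (C.attach H).card + (C.attach K).card ≤ C.len + 1 := by
  have hN : ∀ u ∈ C.attach H, ∃ i, C i = u := fun _ => exists_apply_eq_of_mem_attach
  have hM : ∀ u ∈ (C.attach K).erase (C (p + 1)), ∃ i, C i = u := fun _ hu =>
    exists_apply_eq_of_mem_attach (Finset.mem_of_mem_erase hu)
  have hshift : ∀ i : ℤ, 0 ≤ i → i ≤ 2 → Disjoint (C.shift i (C.attach H))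
      (C.shift (-1) ((C.attach K).erase (C (p + 1)))) := fun i hi hi' => by
    refine Finset.disjoint_left.2 fun v hv hv' => ?_
    obtain ⟨q, hq, rfl⟩ := (mem_shift hN).1 hv
    obtain ⟨r, hr, hrq⟩ := (mem_shift hM).1 hv'
    have hrq' : C r = C (q + (i + 1)) := by
      rw [C.eq_iff] at hrq ⊢
      convert hrq using 1
      ring
    rw [hrq', Finset.mem_erase] at hr
    exact hr.1 (hH.apply_add_eq_of_mem_attach hC hK hHK hp hp' hq (by omega) (by omega) hr.2)
  have hdisj := hshift 0 le_rfl zero_le_two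
  rw [shift_zero hN] at hdisj
  have hrest := Finset.card_le_card (Finset.union_subset
    (hH.attach_subset_rest hC (i := 1) (j := 2) (by decide) (by decide) (by decide) (by decide))
    (Finset.subset_sdiff.2 ⟨shift_subset_verts hM (-1),
      (Finset.disjoint_union_left.2
        ⟨hshift 1 (by omega) (by omega), hshift 2 (by omega) le_rfl⟩).symm⟩))
  rw [Finset.card_union_of_disjoint hdisj, card_shift hM, Finset.card_erase_of_mem hp'] at hrest
  have := hH.card_rest_add hC (i := 1) (j := 2) (by decide) (by decide)
  omega

theorem four_mul_minDegree_le [Fintype V] (hC : C.IsLongest) (hH : C.IsTwinPair H)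
    (hK : C.IsTwinPair K) (hHK : Disjoint H K) (hα : indepNumber G ≤ G.minDegree)
    (hNH : G.minDegree = (C.attach H).card + 1) (hNK : G.minDegree = (C.attach K).card + 1) :
    4 * G.minDegree ≤ C.len + 5 := by
  obtain ⟨p, hp, hp'⟩ := hH.exists_apply_succ_mem_attach hC hK hHK (hNH ▸ hα)
  have := hH.three_mul_card_attach_add_card_attach_le hC hK hHK hp hp'
  omega

end IsTwinPair

end CyclicWalk

end TwinPairs

section Separations

variable {G : SimpleGraph V}

/-- `S` separates `G` into the nonempty sides `A` and `B`. -/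
structure IsSeparation (G : SimpleGraph V) (S A B : Finset V) : Prop where
  mem_or_mem_or_mem : ∀ v, v ∈ S ∨ v ∈ A ∨ v ∈ B
  disjoint_left : Disjoint S A
  disjoint_right : Disjoint S B
  disjoint : Disjoint A B
  left_nonempty : A.Nonempty
  right_nonempty : B.Nonempty
  not_adj : ∀ a ∈ A, ∀ b ∈ B, ¬ G.Adj a b

namespace IsSeparation

variable {S A B : Finset V} {b w : V}

theorem symm (hS : IsSeparation G S A B) : IsSeparation G S B A where
  mem_or_mem_or_mem v := (hS.mem_or_mem_or_mem v).imp_right Or.symm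
  disjoint_left := hS.disjoint_right
  disjoint_right := hS.disjoint_left
  disjoint := hS.disjoint.symm
  left_nonempty := hS.right_nonempty
  right_nonempty := hS.left_nonempty
  not_adj b hb a ha hba := hS.not_adj a ha b hb hba.symm

theorem mem_or_mem_of_adj (hS : IsSeparation G S A B) (hb : b ∈ B) (hbw : G.Adj b w) :
    w ∈ S ∨ w ∈ B :=
  (hS.mem_or_mem_or_mem w).imp_right
    (Or.resolve_left · fun hw => hS.not_adj w hw b hb hbw.symm)

variable [DecidableEq V]

theorem card_inter_add_card_inter_le (hS : IsSeparation G S A B) (R : Finset V) :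
    (A ∩ R).card + (B ∩ R).card ≤ R.card := by
  rw [← Finset.card_union_of_disjoint
    (hS.disjoint.mono Finset.inter_subset_left Finset.inter_subset_left)]
  exact Finset.card_le_card
    (Finset.union_subset Finset.inter_subset_right Finset.inter_subset_right)

omit [DecidableEq V] in
theorem minDegree_add_card_le [Fintype V] [DecidableRel G.Adj] (hS : IsSeparation G S A B)
    (hb : b ∈ B) {U T : Finset V} (hU : U ⊆ S) (hbU : ∀ u ∈ U, ¬ G.Adj b u)
    (hT : ∀ w ∈ B, G.Adj b w → w ∈ T) : G.minDegree + U.card ≤ S.card + T.card := by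
  classical
  have hsub : G.neighborFinset b ⊆ (S \ U) ∪ T := fun w hw => by
    have hbw : G.Adj b w := (G.mem_neighborFinset b w).1 hw
    rw [Finset.mem_union, Finset.mem_sdiff]
    exact (hS.mem_or_mem_of_adj hb hbw).imp (⟨·, fun hwU => hbU w hwU hbw⟩) (hT w · hbw)
  have hcard := (Finset.card_le_card hsub).trans (Finset.card_union_le _ _)
  rw [G.card_neighborFinset_eq_degree] at hcard
  have := G.minDegree_le_degree b
  have := Finset.card_sdiff_add_card_eq_card hU
  omega

omit [DecidableEq V] in
theorem minDegree_lt (hS : IsSeparation G S A B) [Fintype V] [DecidableRel G.Adj] :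
    G.minDegree < S.card + B.card := by
  classical
  obtain ⟨b, hb⟩ := hS.right_nonempty
  have := hS.minDegree_add_card_le hb (U := ∅) (T := B.erase b) (Finset.empty_subset S) (by simp)
    fun w hw hbw => Finset.mem_erase.2 ⟨hbw.ne', hw⟩
  have := Finset.card_erase_lt_of_mem hb
  rw [Finset.card_empty] at *
  omega

end IsSeparation

namespace CyclicWalk

variable {C : CyclicWalk G} {H S A B : Finset V} {i j k ε ε' : ℤ} {a b v x : V}
  [DecidableEq V]

theorem rest_comm (U : Finset V) (i j : ℤ) : C.rest U i j = C.rest U j i := by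
  rw [rest, rest, Finset.union_comm]

theorem inter_rest_subset_rest {U : Finset V} (hA : Disjoint A (C.shift j U)) :
    A ∩ C.rest U i k ⊆ C.rest U i j := fun v hv => by
  have := Finset.disjoint_left.1 hA
  simp only [rest, Finset.mem_inter, Finset.mem_sdiff, Finset.mem_union] at hv ⊢
  tauto

variable [DecidableRel G.Adj]

namespace IsTwinPair

theorem not_adj_of_mem_shift (hC : C.IsLongest) (hH : C.IsTwinPair H) (hε : ε = 1 ∨ ε = -1)
    (hv : v ∈ C.shift ε (C.attach H)) (hx : x ∈ H) : ¬ G.Adj v x := by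
  have hN : ∀ u ∈ C.attach H, ∃ i, C i = u := fun _ => exists_apply_eq_of_mem_attach
  intro hvx
  have hdisj := hH.disjoint_shift hC (i := 0) (j := ε) (by omega) (by rw [abs_le]; omega)
  rw [shift_zero hN] at hdisj
  obtain ⟨p, -, rfl⟩ := (mem_shift hN).1 hv
  exact Finset.disjoint_left.1 hdisj (apply_mem_attach.2 ⟨x, hx, hvx⟩) hv

theorem exists_forall_adj_mem_rest (hC : C.IsLongest) (hH : C.IsTwinPair H)
    (hcover : ∀ v, v ∈ H ∨ v ∈ Set.range C) (hε : ε = 1 ∨ ε = -1)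
    (hv : v ∈ C.shift ε (C.attach H)) :
    ∃ v', ∀ w, G.Adj v w → w = v' ∨ w ∈ C.rest (C.attach H) ε (2 * ε) := by
  have hN : ∀ u ∈ C.attach H, ∃ i, C i = u := fun _ => exists_apply_eq_of_mem_attach
  have hvH := fun x => hH.not_adj_of_mem_shift hC hε hv (x := x)
  obtain ⟨p, hp, rfl⟩ := (mem_shift hN).1 hv
  refine ⟨C (p + 2 * ε), fun w hvw => ?_⟩
  have hwC : w ∈ Set.range C := (hcover w).resolve_left fun hwH => hvH w hwH hvw
  by_contra! hw
  rw [rest, Finset.mem_sdiff, mem_verts, not_and, not_not, Finset.mem_union] at hw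
  rcases hw.2 hwC with hw' | hw' <;> obtain ⟨q, hq, rfl⟩ := (mem_shift hN).1 hw' <;>
    by_cases hpq : C p = C q
  · rw [← C.rot_apply, hpq, C.rot_apply] at hvw
    exact G.irrefl hvw
  · exact hH.not_adj_add_mul hC hε hp hq hpq zero_lt_one one_le_two (by rwa [one_mul])
  · exact hw.1 (by rw [← C.rot_apply, ← hpq, C.rot_apply])
  · exact hH.not_adj_add_mul hC hε hp hq hpq zero_lt_two le_rfl hvw

theorem card_add_three_mul_card_attach_le (hC : C.IsLongest) (hH : C.IsTwinPair H)
    (hB : B ⊆ C.verts) (h₁ : Disjoint B (C.shift 1 (C.attach H)))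
    (h₂ : Disjoint B (C.shift (-1) (C.attach H))) :
    B.card + 3 * (C.attach H).card ≤ C.len + (B ∩ C.attach H).card := by
  have hsub : B ∪ C.attach H ⊆ C.rest (C.attach H) 1 (-1) :=
    Finset.union_subset (Finset.subset_sdiff.2 ⟨hB, Finset.disjoint_union_right.2 ⟨h₁, h₂⟩⟩)
      (hH.attach_subset_rest hC (by decide) (by decide) (by decide) (by decide))
  have := Finset.card_le_card hsub
  have := Finset.card_union_add_card_inter B (C.attach H)
  have := hH.card_rest_add hC (i := 1) (j := -1) (by decide) (by decide)
  omega

variable [Fintype V]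

theorem minDegree_add_card_inter_le (hC : C.IsLongest) (hH : C.IsTwinPair H)
    (hcover : ∀ v, v ∈ H ∨ v ∈ Set.range C) (hS : IsSeparation G S A B)
    (hε : ε = 1 ∨ ε = -1) (hbB : b ∈ B) (hb : b ∈ C.shift ε (C.attach H)) :
    G.minDegree + (S ∩ H).card ≤ S.card + (B ∩ C.rest (C.attach H) ε (2 * ε)).card + 1 := by
  obtain ⟨b', hb'⟩ := hH.exists_forall_adj_mem_rest hC hcover hε hb
  have := hS.minDegree_add_card_le hbB
    (T := insert b' (B ∩ C.rest (C.attach H) ε (2 * ε))) Finset.inter_subset_left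
    (fun u hu => hH.not_adj_of_mem_shift hC hε hb (Finset.mem_inter.1 hu).2)
    fun w hw hbw => by
      rw [Finset.mem_insert, Finset.mem_inter]
      exact (hb' w hbw).imp_right (⟨hw, ·⟩)
  have := Finset.card_insert_le b' (B ∩ C.rest (C.attach H) ε (2 * ε))
  omega

theorem four_mul_minDegree_le_of_mem_left (hC : C.IsLongest) (hH : C.IsTwinPair H)
    (hN : G.minDegree = (C.attach H).card + 1) (hcover : ∀ v, v ∈ H ∨ v ∈ Set.range C)
    (hS : IsSeparation G S A B) (hx : x ∈ H) (hxA : x ∈ A) :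
    4 * G.minDegree ≤ C.len + S.card + 4 := by
  have hBN : Disjoint B (C.attach H) := Finset.disjoint_left.2 fun b hb hbN => by
    obtain ⟨i, rfl⟩ := exists_apply_eq_of_mem_attach hbN
    exact hS.not_adj x hxA _ hb (hH.adj_of_mem_attach hbN hx).symm
  by_cases hends : ∃ ε : ℤ, (ε = 1 ∨ ε = -1) ∧ ¬ Disjoint B (C.shift ε (C.attach H))
  · obtain ⟨ε, hε, hdisj⟩ := hends
    obtain ⟨b, hbB, hb⟩ := Finset.not_disjoint_iff.1 hdisj
    have := hH.minDegree_add_card_inter_le hC hcover hS hε hbB hb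
    have hNR := hH.attach_subset_rest hC (i := ε) (j := 2 * ε) (by omega)
      (by rw [abs_le]; omega) (by omega) (by rw [abs_le]; omega)
    have hR := hH.card_rest_add hC (i := ε) (j := 2 * ε) (by omega) (by rw [abs_le]; omega)
    have hBR := Finset.card_le_card (Finset.union_subset (Finset.inter_subset_right (s₁ := B)) hNR)
    rw [Finset.card_union_of_disjoint (hBN.mono_left Finset.inter_subset_left)] at hBR
    omega
  · push Not at hends
    have hB : B ⊆ C.verts := fun b hb => mem_verts.2 <| (hcover b).resolve_left fun hbH =>
      hS.not_adj x hxA b hb <| hH.adj_of_ne hx hbH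
        (ne_of_mem_of_not_mem hb (Finset.disjoint_left.1 hS.disjoint hxA)).symm
    have := hH.card_add_three_mul_card_attach_le hC hB (hends 1 (.inl rfl)) (hends _ (.inr rfl))
    rw [Finset.disjoint_iff_inter_eq_empty.1 hBN, Finset.card_empty] at this
    have := hS.minDegree_lt
    omega

theorem four_mul_minDegree_le_of_ends (hC : C.IsLongest) (hH : C.IsTwinPair H)
    (hN : G.minDegree = (C.attach H).card + 1) (hcover : ∀ v, v ∈ H ∨ v ∈ Set.range C)
    (hS : IsSeparation G S A B) (hHS : H ⊆ S) (hε : ε = 1 ∨ ε = -1) (hε' : ε' = 1 ∨ ε' = -1)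
    (hA : ¬ Disjoint A (C.shift ε (C.attach H))) (hB : ¬ Disjoint B (C.shift ε' (C.attach H)))
    {R : Finset V} (hR : R.card + 2 * (C.attach H).card = C.len)
    (hAR : A ∩ C.rest (C.attach H) ε (2 * ε) ⊆ R)
    (hBR : B ∩ C.rest (C.attach H) ε' (2 * ε') ⊆ R) :
    4 * G.minDegree ≤ C.len + 2 * S.card := by
  obtain ⟨a, haA, ha⟩ := Finset.not_disjoint_iff.1 hA
  obtain ⟨b, hbB, hb⟩ := Finset.not_disjoint_iff.1 hB
  have h₁ := hH.minDegree_add_card_inter_le hC hcover hS.symm hε haA ha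
  have h₂ := hH.minDegree_add_card_inter_le hC hcover hS hε' hbB hb
  rw [Finset.inter_eq_right.2 hHS, hH.card_eq_two] at h₁ h₂
  have := Finset.card_le_card (Finset.subset_inter Finset.inter_subset_left hAR)
  have := Finset.card_le_card (Finset.subset_inter Finset.inter_subset_left hBR)
  have := hS.card_inter_add_card_inter_le R
  omega

theorem four_mul_minDegree_le_of_disjoint (hC : C.IsLongest) (hH : C.IsTwinPair H)
    (hN : G.minDegree = (C.attach H).card + 1) (hcover : ∀ v, v ∈ H ∨ v ∈ Set.range C)
    (hS : IsSeparation G S A B) (hHS : H ⊆ S) (h₁ : Disjoint B (C.shift 1 (C.attach H)))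
    (h₂ : Disjoint B (C.shift (-1) (C.attach H))) :
    4 * G.minDegree ≤ C.len + 2 * S.card := by
  have hBN : ∀ u ∈ B ∩ C.attach H, ∃ i, C i = u := fun _ hu =>
    exists_apply_eq_of_mem_attach (Finset.mem_inter.1 hu).2
  have hB : B ⊆ C.verts := fun b hb => mem_verts.2 <| (hcover b).resolve_left fun hbH =>
    Finset.disjoint_left.1 hS.disjoint_right (hHS hbH) hb
  have hsub : C.shift 1 (B ∩ C.attach H) ⊆ S \ H := fun v hv => by
    obtain ⟨p, hp, rfl⟩ := (mem_shift hBN).1 hv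
    rw [Finset.mem_inter] at hp
    refine Finset.mem_sdiff.2 ⟨?_, fun hpH => hH.apply_ne hpH _ rfl⟩
    refine (hS.mem_or_mem_of_adj hp.1 (C.adj_succ p)).resolve_right fun hpB => ?_
    exact Finset.disjoint_left.1 h₁ hpB
      ((mem_shift fun _ => exists_apply_eq_of_mem_attach).2 ⟨p, hp.2, rfl⟩)
  have hcard := Finset.card_le_card hsub
  rw [card_shift hBN] at hcard
  have := Finset.card_sdiff_add_card_eq_card hHS
  rw [hH.card_eq_two] at this
  have := hH.card_add_three_mul_card_attach_le hC hB h₁ h₂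
  have := hS.minDegree_lt
  omega

theorem four_mul_minDegree_le_of_subset (hC : C.IsLongest) (hH : C.IsTwinPair H)
    (hN : G.minDegree = (C.attach H).card + 1) (hcover : ∀ v, v ∈ H ∨ v ∈ Set.range C)
    (hS : IsSeparation G S A B) (hHS : H ⊆ S) : 4 * G.minDegree ≤ C.len + 2 * S.card := by
  by_cases hB : ∃ ε : ℤ, (ε = 1 ∨ ε = -1) ∧ ¬ Disjoint B (C.shift ε (C.attach H))
  swap
  · push Not at hB
    exact hH.four_mul_minDegree_le_of_disjoint hC hN hcover hS hHS (hB 1 (.inl rfl))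
      (hB _ (.inr rfl))
  obtain ⟨ε, hε, hBε⟩ := hB
  by_cases hAε : Disjoint A (C.shift ε (C.attach H))
  swap
  · exact hH.four_mul_minDegree_le_of_ends hC hN hcover hS hHS hε hε hAε hBε
      (hH.card_rest_add hC (by omega) (by rw [abs_le]; omega)) Finset.inter_subset_right
      Finset.inter_subset_right
  have hε' : -ε = 1 ∨ -ε = -1 := by omega
  by_cases hA : Disjoint A (C.shift (-ε) (C.attach H))
  · rcases hε with rfl | rfl
    · exact hH.four_mul_minDegree_le_of_disjoint hC hN hcover hS.symm hHS hAε hA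
    · exact hH.four_mul_minDegree_le_of_disjoint hC hN hcover hS.symm hHS hA hAε
  by_cases hB : Disjoint B (C.shift (-ε) (C.attach H))
  · exact hH.four_mul_minDegree_le_of_ends hC hN hcover hS hHS hε' hε hA hBε
      (hH.card_rest_add hC (i := -ε) (j := ε) (by omega) (by rw [abs_le]; omega))
      (inter_rest_subset_rest hAε) (C.rest_comm _ ε (-ε) ▸ inter_rest_subset_rest hB)
  · exact hH.four_mul_minDegree_le_of_ends hC hN hcover hS hHS hε' hε' hA hB
      (hH.card_rest_add hC (by omega) (by rw [abs_le]; omega)) Finset.inter_subset_right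
      Finset.inter_subset_right

theorem four_mul_minDegree_le_of_isSeparation (hC : C.IsLongest) (hH : C.IsTwinPair H)
    (hN : G.minDegree = (C.attach H).card + 1) (hcover : ∀ v, v ∈ H ∨ v ∈ Set.range C)
    (hS : IsSeparation G S A B) {k : ℕ} (hk : 4 ≤ k) (hSk : S.card ≤ k) :
    4 * G.minDegree ≤ C.len + 2 * k := by
  by_cases hHS : H ⊆ S
  · have := hH.four_mul_minDegree_le_of_subset hC hN hcover hS hHS
    omega
  · obtain ⟨x, hx, hxS⟩ := Finset.not_subset.1 hHS
    rcases (hS.mem_or_mem_or_mem x).resolve_left hxS with hxA | hxB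
    · have := hH.four_mul_minDegree_le_of_mem_left hC hN hcover hS hx hxA
      omega
    · have := hH.four_mul_minDegree_le_of_mem_left hC hN hcover hS.symm hx hxB
      omega

end IsTwinPair

end CyclicWalk

end Separations

section Circumference

variable {G : SimpleGraph V} {k : ℕ} {v : V}

namespace CyclicWalk

theorem exists_len_eq_of_isCycle {w : G.Walk v v} (hw : w.IsCycle) :
    ∃ C : CyclicWalk G, C.len = w.length := by
  have h3 := hw.three_le_length
  have hmod : ∀ i : ℤ, 0 ≤ i % w.length ∧ i % w.length < w.length := fun i =>
    ⟨Int.emod_nonneg _ (by omega), Int.emod_lt_of_pos _ (by omega)⟩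
  refine ⟨⟨fun i => w.getVert (i % w.length).toNat, w.length, h3, fun i => ?_, fun i j => ?_⟩, rfl⟩
  · have hadj := w.adj_getVert_succ (i := (i % w.length).toNat) (by have := hmod i; omega)
    have hi := hmod i
    rw [← Int.emod_add_emod]
    obtain hlt | heq : i % w.length + 1 < w.length ∨ i % w.length + 1 = w.length := by omega
    · rwa [Int.emod_eq_of_lt (by omega) hlt, Int.toNat_add hi.1 zero_le_one]
    · rw [heq, Int.emod_self, Int.toNat_zero, w.getVert_zero]
      rwa [show (i % w.length).toNat + 1 = w.length by omega, w.getVert_length] at hadj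
  · have := hmod i
    have := hmod j
    rw [hw.getVert_injOn'.eq_iff (by simp only [Set.mem_ofPred_eq]; omega)
      (by simp only [Set.mem_ofPred_eq]; omega), Int.dvd_iff_emod_eq_zero,
      ← Int.emod_eq_emod_iff_emod_sub_eq_zero]
    omega

theorem exists_isLongest [Fintype V] (hG : ¬ G.IsAcyclic) :
    ∃ C : CyclicWalk G, C.IsLongest ∧ C.len = circumference G := by
  have hbdd : BddAbove {n | ∃ (v : V) (w : G.Walk v v), w.IsCycle ∧ w.length = n} := by
    refine ⟨Fintype.card V, ?_⟩
    rintro _ ⟨v, w, hw, rfl⟩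
    simpa using hw.support_nodup.length_le_card
  simp only [IsAcyclic, not_forall, not_not] at hG
  obtain ⟨v, w, hw⟩ := hG
  obtain ⟨v', w', hw', hlen : w'.length = circumference G⟩ :=
    Nat.sSup_mem (Set.nonempty_of_mem (Exists.intro v ⟨w, hw, rfl⟩)) hbdd
  obtain ⟨C, hC⟩ := exists_len_eq_of_isCycle hw'
  rw [hlen] at hC
  exact ⟨C, fun v w hw => hC ▸ le_csSup hbdd ⟨v, w, hw, rfl⟩, hC⟩

end CyclicWalk

section Connectivity

theorem exists_isSeparation_of_not_noSmallCut [Finite V] (h : ¬ NoSmallCut G k) :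
    ∃ S A B, IsSeparation G S A B ∧ S.card < k := by
  classical
  cases nonempty_fintype V
  simp only [NoSmallCut, not_forall] at h
  obtain ⟨S, A, hS, hA, hAS, ⟨v, hvA, hvS⟩, hadj⟩ := h
  push Not at hadj
  refine ⟨S, A, (S ∪ A)ᶜ, ⟨fun u => ?_, hAS.symm, ?_, ?_, hA, ⟨v, ?_⟩, fun a ha b hb => ?_⟩, hS⟩
  · rw [Finset.mem_compl, Finset.mem_union]
    tauto
  · exact disjoint_compl_right.mono_left Finset.subset_union_left
  · exact disjoint_compl_right.mono_left Finset.subset_union_right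
  · simp [hvA, hvS]
  · rw [Finset.mem_compl, Finset.mem_union, not_or] at hb
    exact hadj a ha b hb.2 hb.1

variable [Fintype V]

theorem kConnected_iff : KConnected G k ↔ k < Fintype.card V ∧ NoSmallCut G k := by
  classical
  refine and_congr_right fun hk => ⟨fun h S F hS ⟨a, ha⟩ hFS ⟨v, hvF, hvS⟩ => ?_, fun h S hS => ?_⟩
  · obtain ⟨p⟩ := (h S hS).preconnected ⟨a, Finset.disjoint_left.1 hFS ha⟩ ⟨v, hvS⟩
    obtain ⟨d, -, hd, hd'⟩ := p.exists_boundary_dart {u | u.1 ∈ F} ha hvF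
    exact ⟨d.fst, hd, d.snd, hd', d.snd.2, d.adj⟩
  · obtain ⟨u, hu⟩ : ∃ u, u ∉ S := by
      by_contra! hall
      exact (hS.trans hk).ne (Finset.card_eq_iff_eq_univ S |>.2 (Finset.eq_univ_iff_forall.2 hall))
    refine connected_iff_exists_forall_reachable _ |>.2 ⟨⟨u, hu⟩, fun v => ?_⟩
    by_contra hv
    obtain ⟨a, ha, b, hb, hbS, hab⟩ := h S
      {w | ∃ hw : w ∉ S, (G.induce ((S : Set V)ᶜ)).Reachable ⟨u, hu⟩ ⟨w, hw⟩} hS ⟨u, by simp [hu]⟩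
      (Finset.disjoint_left.2 fun w hw => (Finset.mem_filter.1 hw).2.1)
      ⟨v, fun h => hv (Finset.mem_filter.1 h).2.2, v.2⟩
    obtain ⟨haS, hua⟩ := (Finset.mem_filter.1 ha).2
    have hadj : (G.induce ((S : Set V)ᶜ)).Adj ⟨a, haS⟩ ⟨b, hbS⟩ := hab
    exact hb (Finset.mem_filter.2 ⟨Finset.mem_univ b, hbS, hua.trans hadj.reachable⟩)

namespace KConnected

theorem noSmallCut (h : KConnected G k) : NoSmallCut G k := (kConnected_iff.1 h).2

theorem connected (h : KConnected G k) (hk : 0 < k) : G.Connected := by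
  have := h.2 ∅ (by simpa using hk)
  rw [Finset.coe_empty, Set.compl_empty] at this
  exact (induceUnivIso G).connected_iff.1 this

theorem le_minDegree [DecidableRel G.Adj] (h : KConnected G k) : k ≤ G.minDegree := by
  have : Nonempty V := Fintype.card_pos_iff.1 (k.zero_le.trans_lt h.1)
  refine G.le_minDegree_of_forall_le_degree k fun v => ?_
  rw [← card_neighborFinset_eq_degree]
  by_contra! hlt
  classical
  obtain ⟨u, hu⟩ : ∃ u, u ∉ insert v (G.neighborFinset v) := by
    by_contra! hall
    have := Finset.card_insert_le v (G.neighborFinset v)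
    have := h.1
    rw [Finset.eq_univ_iff_forall.2 hall, Finset.card_univ] at *
    omega
  rw [Finset.mem_insert, not_or] at hu
  exact hlt.not_ge <| h.noSmallCut.le_card (Finset.singleton_nonempty v) (by simp) (by simp)
    ⟨u, by simpa using hu⟩

theorem not_isAcyclic (h : KConnected G k) (hk : 2 ≤ k) : ¬ G.IsAcyclic := fun hG => by
  classical
  have : Nontrivial V := Fintype.one_lt_card_iff_nontrivial.1 (by have := h.1; omega)
  have := (IsTree.mk (h.connected (by omega)) hG).minDegree_eq_one_of_nontrivial
  have := h.le_minDegree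
  omega

end KConnected

end Connectivity

section Main

variable [Fintype V] [DecidableRel G.Adj] {C : CyclicWalk G} {H : Finset V}

namespace CyclicWalk

theorem four_mul_minDegree_le_of_isTwinPair [DecidableEq V] (hC : C.IsLongest)
    (hH : C.IsTwinPair H) (hN : G.minDegree = (C.attach H).card + 1)
    (hcover : ∀ v, v ∈ H ∨ v ∈ Set.range C) (h4 : 4 ≤ k) (hk : KConnected G k)
    (hk' : ¬ KConnected G (k + 1)) : 4 * G.minDegree ≤ C.len + 2 * k := by
  have := hH.le_card_attach hC hk.noSmallCut
  have := hH.card_rest_add hC (i := 1) (j := -1) (by decide) (by decide)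
  have := Finset.card_le_card
    (hH.attach_subset_rest hC (i := 1) (j := -1) (by decide) (by decide) (by decide) (by decide))
  have := C.card_verts ▸ C.verts.card_le_univ
  obtain ⟨S, A, B, hS, hSk⟩ := exists_isSeparation_of_not_noSmallCut
    fun h => hk' (kConnected_iff.2 ⟨by omega, h⟩)
  exact hH.four_mul_minDegree_le_of_isSeparation hC hN hcover hS h4 (by omega)

theorem len_eq_card_or_four_mul_minDegree_le (hC : C.IsLongest)
    (hα : indepNumber G ≤ G.minDegree) (h4 : 4 ≤ k) (hk : KConnected G k)
    (hk' : ¬ KConnected G (k + 1)) :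
    C.len = Fintype.card V ∨ 4 * G.minDegree ≤ C.len + 2 * k := by
  classical
  have hG : NoSmallCut G 4 := hk.noSmallCut.mono h4
  by_cases hspan : ∀ v, v ∈ Set.range C
  · refine Or.inl ?_
    rw [← C.card_verts, ← Finset.card_univ, Finset.eq_univ_iff_forall.2 fun v =>
      mem_verts.2 (hspan v)]
  obtain ⟨H, -, hH⟩ := C.exists_isComponent (U := ∅) (by simp) (by simpa using hspan)
  rcases hH.isTwinPair_or_four_mul_minDegree_le hC hG hα with ⟨hH, hNH⟩ | hle
  swap
  · omega
  by_cases hcover : ∀ v, v ∈ H ∨ v ∈ Set.range C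
  · exact Or.inr (four_mul_minDegree_le_of_isTwinPair hC hH hNH hcover h4 hk hk')
  obtain ⟨K, hHK, hK⟩ := C.exists_isComponent hH.mem_or_mem_range hcover
  rcases hK.isTwinPair_or_four_mul_minDegree_le hC hG hα with ⟨hK, hNK⟩ | hle
  · have := hH.four_mul_minDegree_le hC hK hHK hα hNH hNK
    omega
  · omega

end CyclicWalk

end Main

end Circumference

theorem nikoghosyan_1985_circumference (G : SimpleGraph V) [Fintype V] [DecidableRel G.Adj]
    (h4 : KConnected G 4)
    (hα : indepNumber G ≤ G.minDegree) :
    (circumference G : ℤ) ≥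
      min (Fintype.card V : ℤ) (4 * G.minDegree - 2 * connectivity G) := by
  have hbdd : BddAbove {k | KConnected G k} := ⟨Fintype.card V, fun k hk => hk.1.le⟩
  have h4κ : 4 ≤ connectivity G := le_csSup hbdd h4
  have hκ : KConnected G (connectivity G) := Nat.sSup_mem ⟨4, h4⟩ hbdd
  have hκ' : ¬ KConnected G (connectivity G + 1) := fun h =>
    (le_csSup hbdd h).not_gt (Nat.lt_succ_self _)
  obtain ⟨C, hC, hlen⟩ := CyclicWalk.exists_isLongest (h4.not_isAcyclic (by decide))
  rw [← hlen]
  rcases CyclicWalk.len_eq_card_or_four_mul_minDegree_le hC hα h4κ hκ hκ' with hspan | hle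
  · exact min_le_of_left_le (by rw [hspan])
  · exact min_le_of_right_le (by omega)
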